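/- arXiv:1403.6581 — 3 statements merged into one kernel-verified Lean document; each statement's English description precedes it below -/
import Mathlib

section
/- Let E ⊆ ℝ^d be open and let Φ : ℝ^d → ℝ be Borel measurable with ∫_{ℝ^d} |Φ(y)|·(1+|y|)^{-d-1} dy < ∞, twice continuously differentiable on E, and such that Δ^{1/2}Φ(x) exists and equals 0 for every x ∈ E. Define U : ℝ^d × ℝ → ℝ by U(x,t) = ∫_{ℝ^d} P_{|t|}(x-y)·Φ(y) dy for t ≠ 0 and U(x,0) = Φ(x). Then U is twice continuously differentiable on the open set D = {(x,t) ∈ ℝ^d × ℝ : t ≠ 0 or x ∈ E} and its Laplacian (the sum of all d+1 pure second partial derivatives) vanishes on D. -/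
open MeasureTheory Metric Real Set Filter RealInnerProductSpace
open scoped ENNReal

noncomputable section

/-- Euclidean space ℝ^d. -/
abbrev Ed (d : ℕ) := EuclideanSpace ℝ (Fin d)

/-- The constant `A_{d,α}`. -/
noncomputable def fracConst (d : ℕ) (α : ℝ) : ℝ :=
  α * 2 ^ (α - 1) * π ^ (-(d : ℝ) / 2) * Real.Gamma (((d : ℝ) + α) / 2) / Real.Gamma (1 - α / 2)

/-- The fractional Laplacian `Δ^{α/2} Φ (x)` exists and equals `L`. -/
def fracLapAt (d : ℕ) (α : ℝ) (Φ : Ed d → ℝ) (x : Ed d) (L : ℝ) : Prop :=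
  Filter.Tendsto
    (fun ε : ℝ => fracConst d α *
      ∫ y in {y : Ed d | ε < ‖y - x‖}, (Φ y - Φ x) * ‖y - x‖ ^ (-(d : ℝ) - α))
    (nhdsWithin 0 (Set.Ioi 0)) (nhds L)

/-- The last coordinate of a vector in ℝ^d. -/
def lastCoord (d : ℕ) (x : Ed d) : ℝ :=
  if h : 0 < d then x ⟨d - 1, Nat.sub_lt h Nat.one_pos⟩ else 0

/-- The unit vector `e_d = (0,…,0,1)`. -/
def eLast (d : ℕ) : Ed d :=
  if h : 0 < d then EuclideanSpace.single ⟨d - 1, Nat.sub_lt h Nat.one_pos⟩ (1 : ℝ) else 0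

/-- The right circular cone `Γ_Θ` of angle `Θ`. -/
def cone (d : ℕ) (Θ : ℝ) : Set (Ed d) := {x | ‖x‖ * Real.cos Θ < lastCoord d x}

/-- The unit sphere `S^{d-1}` in ℝ^d. -/
def unitSphere (d : ℕ) : Set (Ed d) := Metric.sphere (0 : Ed d) 1

/-- The spherical cap `B_Θ`. -/
def capB (d : ℕ) (Θ : ℝ) : Set (Ed d) := {θ | θ ∈ unitSphere d ∧ Real.cos Θ < lastCoord d θ}

/-- The surface measure `σ`: the (d-1)-dimensional Hausdorff measure. -/
noncomputable def sphMeasure (d : ℕ) : Measure (Ed d) := μH[(d : ℝ) - 1]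

/-- The kernel `u_λ(t)`. -/
noncomputable def uKernel (d : ℕ) (α lam t : ℝ) : ℝ :=
  ∫ r in Set.Ioi (0 : ℝ), r ^ ((d : ℝ) + lam - 1) * (r ^ 2 - 2 * r * t + 1) ^ (-((d : ℝ) + α) / 2)

/-- The kernel `u_λ(t)` as a value in `[0,∞]`. -/
noncomputable def uKernelE (d : ℕ) (α lam t : ℝ) : ℝ≥0∞ :=
  ∫⁻ r in Set.Ioi (0 : ℝ),
    ENNReal.ofReal (r ^ ((d : ℝ) + lam - 1) * (r ^ 2 - 2 * r * t + 1) ^ (-((d : ℝ) + α) / 2))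

/-- The spherical fractional Laplacian `Δ_S^{α/2} φ (η)` exists and equals `L`. -/
def sphFracLapAt (d : ℕ) (α : ℝ) (φ : Ed d → ℝ) (η : Ed d) (L : ℝ) : Prop :=
  Filter.Tendsto
    (fun ε : ℝ => fracConst d α *
      ∫ θ in {θ : Ed d | θ ∈ unitSphere d ∧ ⟪θ, η⟫ ≤ Real.cos ε},
        (φ θ - φ η) * uKernel d α 0 ⟪θ, η⟫ ∂(sphMeasure d))
    (nhdsWithin 0 (Set.Ioi 0)) (nhds L)

/-- The integrand of the radial operator `R_λ`. -/
noncomputable def RopIntegrand (d : ℕ) (α lam : ℝ) (φ : Ed d → ℝ) (η θ : Ed d) : ℝ :=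
  φ θ * (uKernel d α lam ⟪θ, η⟫ - uKernel d α 0 ⟪θ, η⟫)

/-- The radial operator `R_λ φ (η)`. -/
noncomputable def Rop (d : ℕ) (α lam : ℝ) (φ : Ed d → ℝ) (η : Ed d) : ℝ :=
  fracConst d α * ∫ θ in unitSphere d, RopIntegrand d α lam φ η θ ∂(sphMeasure d)

/-- The modulus `ω`. -/
noncomputable def omegaFn (α Θ : ℝ) : ℝ :=
  if α < 1 then Θ ^ α else if α = 1 then Θ * |Real.log Θ| else Θ

/-- The Euler beta function. -/
noncomputable def eulerBeta (a b : ℝ) : ℝ := Real.Gamma a * Real.Gamma b / Real.Gamma (a + b)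

/-- The constant `B_{d,α}`. -/
noncomputable def Bconst (d : ℕ) (α : ℝ) : ℝ :=
  Real.Gamma (((d : ℝ) + α) / 2) / (π ^ ((3 : ℝ) / 2) * Real.Gamma (((d : ℝ) - 1 + α) / 2)) *
    Real.sin (π * α / 2) * eulerBeta (1 + α / 2) (((d : ℝ) - 1) / 2)

/-- The constant `C_{d-1,α}`. -/
noncomputable def Cexit (d : ℕ) (α : ℝ) : ℝ :=
  Real.Gamma (((d : ℝ) - 1) / 2) /
    (2 ^ α * Real.Gamma (((d : ℝ) - 1 + α) / 2) * Real.Gamma (1 + α / 2))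

/-- The constant `C̃_{d,α}`. -/
noncomputable def Ctilde (d : ℕ) (α : ℝ) : ℝ :=
  π ^ (((d : ℝ) - 1) / 2) / Real.Gamma (((d : ℝ) - 1) / 2) * Cexit d α *
    eulerBeta (1 + α / 2) (((d : ℝ) - 1) / 2)

/-- The norm `|ỹ|` of the first `d-1` coordinates of `y`. -/
noncomputable def tnorm (d : ℕ) (y : Ed d) : ℝ :=
  Real.sqrt (∑ i : Fin d, if (i : ℕ) < d - 1 then (y i) ^ 2 else 0)

/-- The function `s_ε`. -/
noncomputable def sExit (d : ℕ) (α ε : ℝ) (y : Ed d) : ℝ :=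
  Cexit d α * (max (ε ^ 2 - tnorm d y ^ 2) 0) ^ (α / 2)

/-- The cylinder `Π_ε`. -/
def cylPi (d : ℕ) (ε : ℝ) : Set (Ed d) := {y | tnorm d y < ε}

/-- The hyperplane `F = {y : y_d = 1}`. -/
def hyperF (d : ℕ) : Set (Ed d) := {y | lastCoord d y = 1}

/-- The Riesz kernel `h(y) = |y|^{α-d}`. -/
noncomputable def rieszH (d : ℕ) (α : ℝ) (y : Ed d) : ℝ := ‖y‖ ^ (α - (d : ℝ))

/-- The inversion `T x = x/|x|²`. -/
noncomputable def inversion (d : ℕ) (x : Ed d) : Ed d := (‖x‖ ^ 2)⁻¹ • x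

/-- The shifted cone `V_Θ = Γ_Θ + e_d/2`. -/
def Vcone (d : ℕ) (Θ : ℝ) : Set (Ed d) := {y | y - (1 / 2 : ℝ) • eLast d ∈ cone d Θ}

/-- The spindle `L_ε = T(V_Θ)` with `ε = tan(Θ/2)`, i.e. `Θ = 2 arctan ε`. -/
def Lspindle (d : ℕ) (ε : ℝ) : Set (Ed d) := inversion d '' Vcone d (2 * Real.arctan ε)

/-- The curvilinear projection `y* = T(e_d/2 + (Ty - e_d/2)/(2|Ty - e_d/2|))`. -/
noncomputable def ystar (d : ℕ) (y : Ed d) : Ed d :=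
  inversion d ((1 / 2 : ℝ) • eLast d +
    (2 * ‖inversion d y - (1 / 2 : ℝ) • eLast d‖)⁻¹ • (inversion d y - (1 / 2 : ℝ) • eLast d))

open scoped Classical in
/-- The function `s*_ε`. -/
noncomputable def sStar (d : ℕ) (α ε : ℝ) (y : Ed d) : ℝ :=
  if y ∈ Lspindle d ε then Cexit d α * (max (ε ^ 2 - tnorm d (ystar d y) ^ 2) 0) ^ (α / 2)
  else 0

open scoped Classical in
/-- The function `u = K(h s*_ε)`, i.e. `u(y) = s*_ε(Ty)`, `u(0) = 0`. -/
noncomputable def uFn (d : ℕ) (α ε : ℝ) (y : Ed d) : ℝ :=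
  if y = 0 then 0 else sStar d α ε (inversion d y)

/-- The spherical profile `φ_Θ`. -/
noncomputable def profileFn (d : ℕ) (α Θ : ℝ) (θ : Ed d) : ℝ :=
  2 ^ α * Cexit d α *
    (max (Real.tan (Θ / 2) ^ 2 - ‖eLast d - θ‖ ^ 2 / ‖eLast d + θ‖ ^ 2) 0) ^ (α / 2)

/-- Laplacian on ℝ^d as the sum of pure second partial derivatives. -/
noncomputable def lapE (d : ℕ) (u : Ed d → ℝ) (x : Ed d) : ℝ :=
  ∑ i : Fin d,
    iteratedFDeriv ℝ 2 u x ![EuclideanSpace.single i (1 : ℝ), EuclideanSpace.single i (1 : ℝ)]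

/-- Laplacian on ℝ^d × ℝ as the sum of the d+1 pure second partial derivatives. -/
noncomputable def lapProd (d : ℕ) (U : Ed d × ℝ → ℝ) (p : Ed d × ℝ) : ℝ :=
  (∑ i : Fin d, iteratedFDeriv ℝ 2 U p
      ![(EuclideanSpace.single i (1 : ℝ), (0 : ℝ)), (EuclideanSpace.single i (1 : ℝ), (0 : ℝ))]) +
    iteratedFDeriv ℝ 2 U p ![((0 : Ed d), (1 : ℝ)), ((0 : Ed d), (1 : ℝ))]

/-- The Poisson kernel `P_t(x)` for the upper half-space. -/
noncomputable def poissonK (d : ℕ) (t : ℝ) (x : Ed d) : ℝ :=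
  Real.Gamma (((d : ℝ) + 1) / 2) / π ^ (((d : ℝ) + 1) / 2) * t *
    (‖x‖ ^ 2 + t ^ 2) ^ (-((d : ℝ) + 1) / 2)

end

/-!
Subtracting the contribution of `Φ x`, the Poisson integral and its `t`-derivative at `(x, t)`
become integrals of even kernels against the second difference `Φ (x + w) + Φ (x - w) - 2 Φ x`,
which near a point of `E` is `O(‖w‖ ^ 2)` and hence integrable against `‖w‖ ^ (-d - 1)`. By
dominated convergence the Poisson integral tends to `Φ x` and its `t`-derivative to a multiple of
`Δ^{1/2} Φ x = 0` as `t → 0⁺`, so the even extension `U` is continuous on the open set `D`.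
Testing `U (x, |t| + δ)` against the Laplacian of a test function, Fubini's theorem and Green's
identity for the Poisson kernel on the two half-spaces leave only the jump of the `t`-derivative
across `t = 0`, which vanishes as `δ → 0⁺`. Thus `U` is harmonic on `D` in the sense of
distributions. Finally, radial mollifiers turn a continuous distributional solution into a
function that locally equals its smooth averages (Weyl's lemma).
-/

namespace PoissonExtension

open scoped Topology ContDiff Convolution Laplacian

section DirectionalDerivative

variable {V : Type*} [NormedAddCommGroup V] [NormedSpace ℝ V]

lemma contDiff_fderiv_apply {f : V → ℝ} (hf : ContDiff ℝ 2 f) (v : V) :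
    ContDiff ℝ 1 fun x => fderiv ℝ f x v :=
  (hf.fderiv_right le_rfl).clm_apply contDiff_const

lemma continuous_fderiv_fderiv_apply {f : V → ℝ} (hf : ContDiff ℝ 2 f) (v : V) :
    Continuous fun x => fderiv ℝ (fun y => fderiv ℝ f y v) x v :=
  ((contDiff_fderiv_apply hf v).continuous_fderiv one_ne_zero).clm_apply continuous_const

lemma iteratedFDeriv_two_diag {f : V → ℝ} (hf : ContDiff ℝ 2 f) (x e : V) :
    iteratedFDeriv ℝ 2 f x ![e, e] = fderiv ℝ (fun y => fderiv ℝ f y e) x e := by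
  rw [iteratedFDeriv_two_apply, fderiv_clm_apply
    ((hf.fderiv_right (m := 1) le_rfl).differentiable one_ne_zero x) (differentiableAt_const e)]
  simp

end DirectionalDerivative

section Laplacian

variable {V : Type*} [NormedAddCommGroup V] [InnerProductSpace ℝ V]

lemma fderiv_comp_norm_sq {φ : ℝ → ℝ} (hφ : Differentiable ℝ φ) (x e : V) :
    fderiv ℝ (fun y => φ (‖y‖ ^ 2)) x e = deriv φ (‖x‖ ^ 2) * (2 * ⟪x, e⟫) := by
  have h := (hφ (‖x‖ ^ 2)).hasDerivAt.comp_hasFDerivAt x (hasFDerivAt_id x).norm_sq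
  simp [show fderiv ℝ (fun y : V => φ (‖y‖ ^ 2)) x = _ from h.fderiv]

lemma fderiv_fderiv_comp_norm_sq {φ : ℝ → ℝ} (hφ : ContDiff ℝ 2 φ) (x e : V) :
    fderiv ℝ (fun y => fderiv ℝ (fun z => φ (‖z‖ ^ 2)) y e) x e =
      deriv (deriv φ) (‖x‖ ^ 2) * (2 * ⟪x, e⟫) ^ 2 + 2 * deriv φ (‖x‖ ^ 2) * ‖e‖ ^ 2 := by
  have hφ' : Differentiable ℝ (deriv φ) := hφ.differentiable_deriv_two
  have hrad : DifferentiableAt ℝ (fun y : V => deriv φ (‖y‖ ^ 2)) x :=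
    (hφ' _).comp x (differentiableAt_id.norm_sq ℝ)
  have hlin : HasFDerivAt (fun y : V => 2 * ⟪y, e⟫) _ x :=
    ((hasFDerivAt_id x).inner ℝ (hasFDerivAt_const e x)).const_mul 2
  simp only [fderiv_comp_norm_sq (hφ.differentiable two_ne_zero)]
  rw [(hrad.hasFDerivAt.fun_mul hlin).fderiv]
  simp only [add_apply, smul_apply, smul_eq_mul, fderiv_comp_norm_sq hφ',
    ContinuousLinearMap.comp_apply, ContinuousLinearMap.prod_apply, ContinuousLinearMap.id_apply,
    zero_apply, fderivInnerCLM_apply, inner_zero_right, real_inner_self_eq_norm_sq, zero_add,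
    id_eq]
  ring

variable [FiniteDimensional ℝ V]

lemma laplacian_eq_sum_fderiv {ι : Type*} [Fintype ι] (b : OrthonormalBasis ι ℝ V) {f : V → ℝ}
    (hf : ContDiff ℝ 2 f) (x : V) :
    Δ f x = ∑ i, fderiv ℝ (fun y => fderiv ℝ f y (b i)) x (b i) := by
  simp only [InnerProductSpace.laplacian_eq_iteratedFDeriv_orthonormalBasis f b,
    iteratedFDeriv_two_diag hf]

lemma laplacian_eq_zero_of_notMem_tsupport {f : V → ℝ} {x : V} (hx : x ∉ tsupport f) :
    Δ f x = 0 := by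
  rw [(InnerProductSpace.laplacian_congr_nhds
    (notMem_tsupport_iff_eventuallyEq.1 hx)).self_of_nhds]
  exact congrFun (InnerProductSpace.laplacian_const (c := (0 : ℝ))) x

lemma laplacian_comp_sub (f : V → ℝ) (a x : V) : Δ (fun y => f (y - a)) x = Δ f (x - a) := by
  simp only [InnerProductSpace.laplacian_eq_iteratedFDeriv_stdOrthonormalBasis,
    iteratedFDeriv_comp_sub]

lemma laplacian_comp_norm_sq {φ : ℝ → ℝ} (hφ : ContDiff ℝ 2 φ) (x : V) :
    Δ (fun y : V => φ (‖y‖ ^ 2)) x =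
      2 * Module.finrank ℝ V * deriv φ (‖x‖ ^ 2) + 4 * ‖x‖ ^ 2 * deriv (deriv φ) (‖x‖ ^ 2) := by
  have hb := (stdOrthonormalBasis ℝ V).sum_sq_inner_left x
  have hrad : ContDiff ℝ 2 fun y : V => φ (‖y‖ ^ 2) := hφ.comp (contDiff_norm_sq ℝ)
  rw [laplacian_eq_sum_fderiv (stdOrthonormalBasis ℝ V) hrad]
  simp only [fderiv_fderiv_comp_norm_sq hφ, mul_pow, Finset.sum_add_distrib, ← Finset.mul_sum,
    OrthonormalBasis.norm_eq_one, hb,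
    one_pow, Finset.sum_const, Finset.card_univ, Fintype.card_fin, nsmul_eq_mul, mul_one]
  ring

end Laplacian

section RadialDilation

variable {V : Type*} [NormedAddCommGroup V] [InnerProductSpace ℝ V]

lemma hasCompactSupport_of_eq_zero_of_lt_norm [FiniteDimensional ℝ V] {f : V → ℝ} {r : ℝ}
    (hf : ∀ x, r < ‖x‖ → f x = 0) : HasCompactSupport f :=
  HasCompactSupport.intro (isCompact_closedBall 0 r) fun x hx => hf x (by simpa using hx)

/-- The `L¹`-normalised dilation by `r` of the radial function `x ↦ φ (‖x‖²)`. -/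
noncomputable def radialDilation (φ : ℝ → ℝ) (r : ℝ) (x : V) : ℝ :=
  (r ^ Module.finrank ℝ V)⁻¹ * φ (‖x‖ ^ 2 / r ^ 2)

variable {φ : ℝ → ℝ} {r : ℝ}

lemma contDiff_radialDilation {n : WithTop ℕ∞} (hφ : ContDiff ℝ n φ) (r : ℝ) :
    ContDiff ℝ n (radialDilation φ r : V → ℝ) :=
  contDiff_const.mul (hφ.comp ((contDiff_norm_sq ℝ).div_const _))

lemma contDiffOn_uncurry_radialDilation {n : WithTop ℕ∞} (hφ : ContDiff ℝ n φ) :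
    ContDiffOn ℝ n ↿(radialDilation φ : ℝ → V → ℝ) (Ioi 0 ×ˢ univ) := by
  have hne : ∀ p ∈ Ioi (0 : ℝ) ×ˢ (univ : Set V), ∀ k, p.1 ^ k ≠ 0 := fun p hp k =>
    pow_ne_zero k hp.1.ne'
  refine ContDiffOn.mul ((contDiff_fst.pow _).contDiffOn.inv fun p hp => hne p hp _) ?_
  exact hφ.comp_contDiffOn <|
    (contDiff_snd.norm_sq ℝ).contDiffOn.div (contDiff_fst.pow 2).contDiffOn fun p hp => hne p hp 2

lemma radialDilation_eq_zero (hφ : ∀ s, 1 < s → φ s = 0) (hr : 0 < r) {x : V} (hx : r < ‖x‖) :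
    radialDilation φ r x = 0 := by
  rw [radialDilation, hφ _ ((one_lt_div (by positivity)).2 (by gcongr)), mul_zero]

lemma deriv_eq_zero_of_one_lt (hφ : ∀ s, 1 < s → φ s = 0) (s : ℝ) (hs : 1 < s) :
    deriv φ s = 0 := by
  have h : φ =ᶠ[𝓝 s] fun _ => 0 := (lt_mem_nhds hs).mono hφ
  rw [h.deriv_eq, deriv_const]

variable [FiniteDimensional ℝ V]

lemma laplacian_radialDilation (hφ : ContDiff ℝ 2 φ) (r : ℝ) (x : V) :
    Δ (radialDilation φ r : V → ℝ) x = (r ^ Module.finrank ℝ V)⁻¹ *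
      (2 * Module.finrank ℝ V * (deriv φ (‖x‖ ^ 2 / r ^ 2) / r ^ 2) +
        4 * ‖x‖ ^ 2 * (deriv (deriv φ) (‖x‖ ^ 2 / r ^ 2) / r ^ 2 / r ^ 2)) := by
  set c := (r ^ Module.finrank ℝ V)⁻¹
  have h₁ : deriv (fun s => c * φ (s / r ^ 2)) = fun s => c * (deriv φ (s / r ^ 2) / r ^ 2) := by
    ext s
    simp only [div_eq_inv_mul, deriv_const_mul_field, deriv_comp_mul_left, smul_eq_mul]
  have h₂ (s : ℝ) : deriv (fun s => c * (deriv φ (s / r ^ 2) / r ^ 2)) s =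
      c * (deriv (deriv φ) (s / r ^ 2) / r ^ 2 / r ^ 2) := by
    simp only [div_eq_inv_mul, deriv_const_mul_field, deriv_comp_mul_left _ (deriv φ), smul_eq_mul]
  have hψ : ContDiff ℝ 2 fun s => c * φ (s / r ^ 2) :=
    contDiff_const.mul (hφ.comp (contDiff_id.div_const _))
  have h := laplacian_comp_norm_sq hψ x
  rw [h₁, h₂] at h
  exact h.trans (by ring)

-- This identity is the reason why radially weighted means of harmonic functions do not depend on
-- the radius.
lemma hasDerivAt_radialDilation_deriv (hφ : ContDiff ℝ 2 φ) (hr : r ≠ 0) (x : V) :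
    HasDerivAt (fun r => radialDilation (deriv φ) r x)
      (-(r / 2) * Δ (radialDilation φ r : V → ℝ) x) r := by
  set n := Module.finrank ℝ V with hn
  have hpow : HasDerivAt (fun r : ℝ => (r ^ n)⁻¹) _ r := (hasDerivAt_pow n r).inv (pow_ne_zero _ hr)
  have hdiv : HasDerivAt (fun r : ℝ => ‖x‖ ^ 2 / r ^ 2) _ r :=
    (hasDerivAt_const r _).div (hasDerivAt_pow 2 r) (pow_ne_zero _ hr)
  have hφ' := (hφ.differentiable_deriv_two (‖x‖ ^ 2 / r ^ 2)).hasDerivAt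
  refine (hpow.mul (hφ'.comp r hdiv)).congr_deriv ?_
  rw [laplacian_radialDilation hφ, ← hn]
  rcases n with _ | n
  · simp only [Function.comp_apply, pow_zero, CharP.cast_eq_zero]
    field_simp
    ring
  · simp only [Function.comp_apply, Nat.add_sub_cancel]
    push_cast
    field_simp
    ring

end RadialDilation

section Convolution

variable {V : Type*} [NormedAddCommGroup V] [NormedSpace ℝ V]
  [MeasurableSpace V] [BorelSpace V] {μ : Measure V}

lemma hasDerivAt_integral_mul_sub_of_param {v : V → ℝ} (hv : LocallyIntegrable v μ)
    {g : ℝ → V → ℝ} {s : Set ℝ} {k : Set V} (hs : IsOpen s) (hk : IsCompact k)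
    (hgk : ∀ r x, r ∈ s → x ∉ k → g r x = 0) (hg : ContDiffOn ℝ 1 ↿g (s ×ˢ univ))
    {r : ℝ} (hr : r ∈ s) (p : V) :
    HasDerivAt (fun r => ∫ q, v q * g r (p - q) ∂μ)
      (∫ q, v q * deriv (fun r => g r (p - q)) r ∂μ) r := by
  have hmem (x : V) : s ×ˢ (univ : Set V) ∈ 𝓝 (r, x) :=
    prod_mem_nhds (hs.mem_nhds hr) univ_mem
  have hpath (x : V) : HasDerivAt (fun r : ℝ => (r, x)) ((1 : ℝ), (0 : V)) r :=
    (hasDerivAt_id r).prodMk (hasDerivAt_const r x)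
  have hderiv (x : V) : HasDerivAt (fun r => g r x) (fderiv ℝ ↿g (r, x) (1, 0)) r :=
    HasFDerivAt.comp_hasDerivAt (f := fun r => (r, x)) r
      ((hg.contDiffAt (hmem x)).differentiableAt one_ne_zero).hasFDerivAt (hpath x)
  have hsupp : HasCompactSupport fun x => fderiv ℝ ↿g (r, x) := by
    refine HasCompactSupport.intro hk fun x hx => ?_
    have hzero : ↿g =ᶠ[𝓝 (r, x)] fun _ => 0 := by
      filter_upwards [prod_mem_nhds (hs.mem_nhds hr) (hk.isClosed.isOpen_compl.mem_nhds hx)]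
        with y hy using hgk y.1 y.2 hy.1 hy.2
    rw [hzero.fderiv_eq, fderiv_const_apply]
  have hcont : Continuous fun x => fderiv ℝ ↿g (r, x) :=
    (hg.continuousOn_fderiv_of_isOpen (hs.prod isOpen_univ) le_rfl).comp_continuous (by fun_prop)
      fun x => ⟨hr, mem_univ x⟩
  have hconv := (hasFDerivAt_convolution_right_with_param (ContinuousLinearMap.mul ℝ ℝ) hs hk hgk
    hv hg (r, p) hr).comp_hasDerivAt r (hpath p)
  rw [convolution_precompR_apply _ hv hsupp hcont] at hconv
  simp only [(hderiv _).deriv]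
  exact hconv

variable [SFinite μ] [μ.IsAddLeftInvariant]

lemma fderiv_convolution_apply {v g : V → ℝ} (hv : LocallyIntegrable v μ) (hg : ContDiff ℝ 1 g)
    (hgc : HasCompactSupport g) (p e : V) :
    fderiv ℝ (v ⋆[ContinuousLinearMap.mul ℝ ℝ, μ] g) p e =
      (v ⋆[ContinuousLinearMap.mul ℝ ℝ, μ] fun q => fderiv ℝ g q e) p := by
  rw [(hgc.hasFDerivAt_convolution_right _ hv hg p).fderiv,
    convolution_precompR_apply _ hv (hgc.fderiv ℝ) (hg.continuous_fderiv one_ne_zero)]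

lemma fderiv_fderiv_convolution_apply {v g : V → ℝ} (hv : LocallyIntegrable v μ)
    (hg : ContDiff ℝ 2 g) (hgc : HasCompactSupport g) (p e : V) :
    fderiv ℝ (fun q => fderiv ℝ (v ⋆[ContinuousLinearMap.mul ℝ ℝ, μ] g) q e) p e =
      (v ⋆[ContinuousLinearMap.mul ℝ ℝ, μ] fun q => fderiv ℝ (fun y => fderiv ℝ g y e) q e) p := by
  simp only [fderiv_convolution_apply hv (hg.of_le one_le_two) hgc,
    ← fderiv_convolution_apply hv (contDiff_fderiv_apply hg e) (hgc.fderiv_apply (𝕜 := ℝ) e)]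

end Convolution

section Weyl

variable {V : Type*} [NormedAddCommGroup V] [InnerProductSpace ℝ V] [FiniteDimensional ℝ V]
  [MeasurableSpace V] [BorelSpace V]

lemma laplacian_convolution {v g : V → ℝ} (hv : LocallyIntegrable v) (hg : ContDiff ℝ 2 g)
    (hgc : HasCompactSupport g) (p : V) :
    Δ (v ⋆[ContinuousLinearMap.mul ℝ ℝ, volume] g) p = ∫ q, v q * Δ g (p - q) := by
  let b := stdOrthonormalBasis ℝ V
  have hint (e : V) : Integrable fun q =>
      v q * fderiv ℝ (fun y => fderiv ℝ g y e) (p - q) e :=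
    ((hgc.fderiv_apply (𝕜 := ℝ) e).fderiv_apply (𝕜 := ℝ) e).convolutionExists_right
      (ContinuousLinearMap.mul ℝ ℝ) hv (continuous_fderiv_fderiv_apply hg e) p
  have hconv := hgc.contDiff_convolution_right (n := 2) (ContinuousLinearMap.mul ℝ ℝ) hv hg
  simp only [laplacian_eq_sum_fderiv b hconv, laplacian_eq_sum_fderiv b hg,
    fderiv_fderiv_convolution_apply hv hg hgc, Finset.mul_sum]
  exact (integral_finsetSum _ fun i _ => hint (b i)).symm

/-- `u` satisfies `Δ u = 0` on `D` in the sense of distributions, tested against smooth functions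
with compact support in `D`. -/
def WeaklyHarmonicOn (u : V → ℝ) (D : Set V) : Prop :=
  ∀ ζ : V → ℝ, ContDiff ℝ ∞ ζ → HasCompactSupport ζ → tsupport ζ ⊆ D → ∫ q, u q * Δ ζ q = 0

lemma WeaklyHarmonicOn.mono {u : V → ℝ} {D D' : Set V} (hu : WeaklyHarmonicOn u D)
    (hD : D' ⊆ D) : WeaklyHarmonicOn u D' :=
  fun ζ hζ hζc hζD => hu ζ hζ hζc (hζD.trans hD)

lemma WeaklyHarmonicOn.congr {u v : V → ℝ} {D : Set V} (hu : WeaklyHarmonicOn u D)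
    (huv : EqOn u v D) : WeaklyHarmonicOn v D := by
  intro ζ hζ hζc hζD
  rw [← hu ζ hζ hζc hζD]
  congr 1 with q
  by_cases hq : q ∈ tsupport ζ
  · rw [huv (hζD hq)]
  · simp [laplacian_eq_zero_of_notMem_tsupport hq]

lemma WeaklyHarmonicOn.integral_mul_laplacian_radialDilation {v : V → ℝ} {p : V} {R r : ℝ}
    (hv : WeaklyHarmonicOn v (ball p R)) {φ : ℝ → ℝ} (hφ : ContDiff ℝ ∞ φ)
    (hφ₁ : ∀ s, 1 < s → φ s = 0) (hr : 0 < r) (hrR : r < R) :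
    ∫ q, v q * Δ (radialDilation φ r : V → ℝ) (p - q) = 0 := by
  have hzero (q : V) (hq : q ∉ closedBall p r) : radialDilation φ r (q - p) = 0 :=
    radialDilation_eq_zero hφ₁ hr (by simpa [dist_eq_norm] using hq)
  have hsupp : tsupport (fun q => radialDilation φ r (q - p)) ⊆ closedBall p r :=
    closure_minimal (Function.support_subset_iff'.2 hzero) isClosed_closedBall
  rw [← hv (fun q => radialDilation φ r (q - p))
    ((contDiff_radialDilation hφ r).comp (contDiff_id.sub contDiff_const))
    (HasCompactSupport.intro (isCompact_closedBall p r) hzero)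
    (hsupp.trans (closedBall_subset_ball hrR))]
  congr 1 with q
  rw [laplacian_comp_sub]
  simp only [laplacian_radialDilation (contDiff_infty.1 hφ 2), norm_sub_rev p q]

lemma integral_mul_radialDilation_sub (v : V → ℝ) (φ : ℝ → ℝ) (p : V) {r : ℝ} (hr : 0 < r) :
    ∫ q, v q * radialDilation φ r (p - q) = ∫ y, v (p + r • y) * φ (‖y‖ ^ 2) := by
  have hscale := Measure.integral_comp_smul_of_nonneg (volume : Measure V)
    (fun y => v (p + y) * φ (‖y‖ ^ 2 / r ^ 2)) r (hR := hr.le)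
  have hnorm (y : V) : ‖r • y‖ ^ 2 / r ^ 2 = ‖y‖ ^ 2 := by
    rw [norm_smul, norm_eq_abs, mul_pow, sq_abs]
    field_simp
  simp only [hnorm] at hscale
  rw [hscale, smul_eq_mul, ← integral_const_mul,
    ← integral_add_right_eq_self (fun q => v q * radialDilation φ r (p - q)) p]
  congr 1 with q
  rw [radialDilation, add_comm q, sub_add_cancel_left, norm_neg]
  ring

lemma continuous_integral_comp_add_smul_mul {v : V → ℝ} (hv : Continuous v) {φ : ℝ → ℝ}
    (hφ : Continuous φ) (hφ₁ : ∀ s, 1 < s → φ s = 0) (p : V) :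
    Continuous fun r : ℝ => ∫ y, v (p + r • y) * φ (‖y‖ ^ 2) := by
  have hcont : Continuous (Function.uncurry fun (r : ℝ) (y : V) => v (p + r • y) * φ (‖y‖ ^ 2)) :=
    (hv.comp (by fun_prop)).mul (hφ.comp (by fun_prop))
  refine (continuous_parametric_integral_of_continuous (μ := volume) hcont
    (isCompact_closedBall 0 1)).congr fun r => ?_
  refine setIntegral_eq_integral_of_forall_compl_eq_zero fun y hy => ?_
  rw [mem_closedBall_zero_iff, not_le] at hy
  rw [hφ₁ _ (one_lt_pow₀ hy two_ne_zero), mul_zero]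

lemma WeaklyHarmonicOn.integral_mul_radialDilation_deriv {v : V → ℝ} (hvc : Continuous v) {p : V}
    {R r : ℝ} (hv : WeaklyHarmonicOn v (ball p R)) {φ : ℝ → ℝ} (hφ : ContDiff ℝ ∞ φ)
    (hφ₁ : ∀ s, 1 < s → φ s = 0) (hr : 0 < r) (hrR : r < R) :
    ∫ q, v q * radialDilation (deriv φ) r (p - q) = v p * ∫ y : V, deriv φ (‖y‖ ^ 2) := by
  have hφ' : ContDiff ℝ ∞ (deriv φ) := (contDiff_infty_iff_deriv.1 hφ).2
  have hφ'₁ := deriv_eq_zero_of_one_lt hφ₁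
  set J : ℝ → ℝ := fun r => ∫ y, v (p + r • y) * deriv φ (‖y‖ ^ 2)
  have hJ : ContinuousOn J (Icc 0 r) :=
    (continuous_integral_comp_add_smul_mul hvc hφ'.continuous hφ'₁ p).continuousOn
  have hJ' : ∀ s ∈ Ioo 0 r, HasDerivAt J 0 s := by
    intro s hs
    have hderiv := hasDerivAt_integral_mul_sub_of_param
      (hvc.locallyIntegrable (μ := volume))
      (g := radialDilation (deriv φ)) isOpen_Ioo (isCompact_closedBall (0 : V) r)
      (fun t x ht hx => radialDilation_eq_zero hφ'₁ ht.1
        (ht.2.trans (by simpa using hx)))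
      ((contDiffOn_uncurry_radialDilation (contDiff_infty.1 hφ' 1)).mono
        (prod_mono Ioo_subset_Ioi_self subset_rfl)) hs p
    simp only [(hasDerivAt_radialDilation_deriv (contDiff_infty.1 hφ 2) hs.1.ne' _).deriv,
      mul_left_comm (v _), integral_const_mul,
      hv.integral_mul_laplacian_radialDilation hφ hφ₁ hs.1 (hs.2.trans hrR), mul_zero] at hderiv
    refine hderiv.congr_of_eventuallyEq ?_
    filter_upwards [lt_mem_nhds hs.1] with t ht
    exact (integral_mul_radialDilation_sub v (deriv φ) p ht).symm
  obtain ⟨c, -, hc⟩ := exists_hasDerivAt_eq_slope J (fun _ => 0) hr hJ hJ'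
  have hconst : J r = J 0 := by
    rw [eq_comm, div_eq_zero_iff, sub_eq_zero] at hc
    exact hc.resolve_right (by simpa using hr.ne')
  rw [integral_mul_radialDilation_sub v (deriv φ) p hr]
  simpa [J, integral_const_mul] using hconst

variable (V) in
lemma exists_contDiff_integral_deriv_norm_sq_ne_zero :
    ∃ φ : ℝ → ℝ, ContDiff ℝ ∞ φ ∧ (∀ s, 1 < s → φ s = 0) ∧
      ∫ y : V, deriv φ (‖y‖ ^ 2) ≠ 0 := by
  obtain ⟨c, hc, hslope⟩ := exists_deriv_eq_slope smoothTransition (zero_lt_one (α := ℝ))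
    smoothTransition.continuous.continuousOn
    (smoothTransition.contDiff (n := 1).differentiable one_ne_zero).differentiableOn
  set φ : ℝ → ℝ := fun s => smoothTransition (c - s)
  have hφ : ContDiff ℝ ∞ φ := smoothTransition.contDiff.comp (contDiff_const.sub contDiff_id)
  have hφ₁ : ∀ s, 1 < s → φ s = 0 := fun s hs =>
    smoothTransition.zero_of_nonpos (by linarith [hc.2])
  have hφanti : Antitone φ := fun a b hab => smoothTransition.monotone (by linarith)
  have hφ₀ : deriv φ 0 ≠ 0 := by
    rw [deriv_comp_const_sub, sub_zero, hslope]
    simp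
  have hcont : Continuous fun y : V => -deriv φ (‖y‖ ^ 2) :=
    ((contDiff_infty_iff_deriv.1 hφ).2.continuous.comp (by fun_prop)).neg
  have hsupp : HasCompactSupport fun y : V => -deriv φ (‖y‖ ^ 2) :=
    hasCompactSupport_of_eq_zero_of_lt_norm (r := 1) fun y hy => by
      rw [deriv_eq_zero_of_one_lt hφ₁ _ (one_lt_pow₀ hy two_ne_zero), neg_zero]
  have hpos := hcont.integral_pos_of_hasCompactSupport_nonneg_nonzero (μ := volume) (x := 0) hsupp
    (fun y => neg_nonneg.2 hφanti.deriv_nonpos) (by simpa using hφ₀)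
  rw [integral_neg, Left.neg_pos_iff] at hpos
  exact ⟨φ, hφ, hφ₁, hpos.ne⟩

lemma WeaklyHarmonicOn.harmonicAt_of_continuous {v : V → ℝ} (hvc : Continuous v) {p₀ : V} {R : ℝ}
    (hR : 0 < R) (hv : WeaklyHarmonicOn v (ball p₀ R)) :
    InnerProductSpace.HarmonicAt v p₀ := by
  obtain ⟨φ, hφ, hφ₁, hφ₀⟩ := exists_contDiff_integral_deriv_norm_sq_ne_zero V
  have hφ' : ContDiff ℝ ∞ (deriv φ) := (contDiff_infty_iff_deriv.1 hφ).2
  have hφ'₁ := deriv_eq_zero_of_one_lt hφ₁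
  set m := ∫ y : V, deriv φ (‖y‖ ^ 2)
  set K : V → ℝ := radialDilation (deriv φ) (R / 3)
  have hK : ContDiff ℝ ∞ K := contDiff_radialDilation hφ' _
  have hKc : HasCompactSupport K :=
    hasCompactSupport_of_eq_zero_of_lt_norm fun x hx =>
      radialDilation_eq_zero hφ'₁ (by positivity) hx
  have hball : ∀ p ∈ ball p₀ (R / 2), WeaklyHarmonicOn v (ball p (R / 2)) := fun p hp =>
    hv.mono (ball_subset_ball' (by linarith [mem_ball.1 hp]))
  set w := v ⋆[ContinuousLinearMap.mul ℝ ℝ, volume] K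
  have hwC : ContDiff ℝ 2 w :=
    hKc.contDiff_convolution_right (n := 2) _ hvc.locallyIntegrable (contDiff_infty.1 hK 2)
  have hΔw : ∀ p ∈ ball p₀ (R / 2), Δ w p = 0 := fun p hp => by
    rw [laplacian_convolution hvc.locallyIntegrable (contDiff_infty.1 hK 2) hKc]
    exact (hball p hp).integral_mul_laplacian_radialDilation hφ' hφ'₁ (by linarith) (by linarith)
  have hnhds : ball p₀ (R / 2) ∈ 𝓝 p₀ := ball_mem_nhds p₀ (by linarith)
  have hvw : v =ᶠ[𝓝 p₀] m⁻¹ • w := by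
    filter_upwards [hnhds] with p hp
    have hmean : w p = v p * m :=
      (hball p hp).integral_mul_radialDilation_deriv hvc hφ hφ₁ (by linarith) (by linarith)
    rw [Pi.smul_apply, smul_eq_mul, hmean]
    field_simp
  rw [InnerProductSpace.harmonicAt_congr_nhds hvw]
  exact InnerProductSpace.HarmonicAt.const_smul
    ⟨hwC.contDiffAt, by filter_upwards [hnhds] with p hp using hΔw p hp⟩

/-- **Weyl's lemma** for continuous functions. -/
theorem WeaklyHarmonicOn.harmonicOnNhd {u : V → ℝ} {D : Set V} (hu : WeaklyHarmonicOn u D)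
    (hD : IsOpen D) (huc : ContinuousOn u D) : InnerProductSpace.HarmonicOnNhd u D := by
  intro p hp
  obtain ⟨R, hR, hRD⟩ := Metric.nhds_basis_closedBall.mem_iff.1 (hD.mem_nhds hp)
  obtain ⟨g, hg⟩ := ContinuousMap.exists_restrict_eq (isClosed_closedBall (x := p) (ε := R))
    ⟨(closedBall p R).domRestrict u, (huc.mono hRD).domRestrict⟩
  have hug : EqOn u g (closedBall p R) := fun q hq =>
    (DFunLike.congr_fun hg (⟨q, hq⟩ : closedBall p R)).symm
  have hgw : WeaklyHarmonicOn g (ball p R) :=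
    (hu.mono (ball_subset_closedBall.trans hRD)).congr (hug.mono ball_subset_closedBall)
  rw [InnerProductSpace.harmonicAt_congr_nhds (hug.eventuallyEq_of_mem (closedBall_mem_nhds p hR))]
  exact hgw.harmonicAt_of_continuous g.continuous hR

end Weyl

section Product

variable {d : ℕ}

lemma lapProd_eq_sum_fderiv {f : Ed d × ℝ → ℝ} (hf : ContDiff ℝ 2 f) (p : Ed d × ℝ) :
    lapProd d f p =
      (∑ i, fderiv ℝ (fun q => fderiv ℝ f q (EuclideanSpace.single i 1, 0)) p
        (EuclideanSpace.single i 1, 0)) + fderiv ℝ (fun q => fderiv ℝ f q (0, 1)) p (0, 1) := by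
  simp only [lapProd, iteratedFDeriv_two_diag hf]

lemma support_lapProd_subset (f : Ed d × ℝ → ℝ) : Function.support (lapProd d f) ⊆ tsupport f := by
  refine fun p hp => not_imp_comm.1 (fun hpf => ?_) hp
  have h : iteratedFDeriv ℝ 2 f p = 0 :=
    Function.notMem_support.1 fun hp' => hpf (support_iteratedFDeriv_subset 2 hp')
  simp [lapProd, h]

variable (d) in
/-- `ℝ^d × ℝ` with its Euclidean norm, identified with the product space carrying the sup norm on
which `lapProd` is defined. -/
noncomputable abbrev euclideanProdEquiv : WithLp 2 (Ed d × ℝ) ≃L[ℝ] Ed d × ℝ :=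
  WithLp.prodContinuousLinearEquiv 2 ℝ (Ed d) ℝ

lemma laplacian_comp_euclideanProdEquiv (f : Ed d × ℝ → ℝ) (p : WithLp 2 (Ed d × ℝ)) :
    Δ (f ∘ euclideanProdEquiv d) p = lapProd d f (euclideanProdEquiv d p) := by
  have h := (euclideanProdEquiv d).iteratedFDerivWithin_comp_right f uniqueDiffOn_univ
    (mem_univ (euclideanProdEquiv d p)) 2
  rw [preimage_univ, iteratedFDerivWithin_univ, iteratedFDerivWithin_univ] at h
  rw [InnerProductSpace.laplacian_eq_iteratedFDeriv_orthonormalBasis _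
    ((EuclideanSpace.basisFun (Fin d) ℝ).prod (OrthonormalBasis.singleton Unit ℝ))]
  beta_reduce
  rw [h, lapProd]
  simp only [ContinuousMultilinearMap.compContinuousLinearMap_apply, Fintype.sum_sum_type,
    OrthonormalBasis.prod_apply]
  congr 1
  · refine Finset.sum_congr rfl fun i _ => congrArg _ (funext fun j => ?_)
    fin_cases j <;> simp
  · rw [Fintype.sum_unique]
    refine congrArg _ (funext fun j => ?_)
    fin_cases j <;> simp

/-- `U` is harmonic on `D ⊆ ℝ^d × ℝ` in the sense of distributions. This is `WeaklyHarmonicOn` for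
the Laplacian `lapProd`. -/
def WeaklyHarmonicProdOn (U : Ed d × ℝ → ℝ) (D : Set (Ed d × ℝ)) : Prop :=
  ∀ ζ : Ed d × ℝ → ℝ, ContDiff ℝ ∞ ζ → HasCompactSupport ζ → tsupport ζ ⊆ D →
    ∫ q, U q * lapProd d ζ q = 0

lemma WeaklyHarmonicProdOn.comp_euclideanProdEquiv {u : Ed d × ℝ → ℝ} {D : Set (Ed d × ℝ)}
    (hu : WeaklyHarmonicProdOn u D) :
    WeaklyHarmonicOn (u ∘ euclideanProdEquiv d) (euclideanProdEquiv d ⁻¹' D) := by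
  intro ζ hζ hζc hζD
  set e := euclideanProdEquiv d
  have hsupp : tsupport (ζ ∘ e.symm) ⊆ D :=
    (tsupport_comp_eq_preimage ζ e.symm.toHomeomorph).trans_subset fun _ hq => hζD hq
  have h := hu (ζ ∘ e.symm) (hζ.comp e.symm.contDiff)
    (hζc.comp_homeomorph e.symm.toHomeomorph) hsupp
  rw [← (WithLp.volume_preserving_ofLp (Ed d) ℝ).integral_comp
    e.toHomeomorph.measurableEmbedding] at h
  have hlap (q) : lapProd d (ζ ∘ e.symm) (e q) = Δ ζ q := by
    rw [← laplacian_comp_euclideanProdEquiv, Function.comp_assoc, e.symm_comp_self,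
      Function.comp_id]
  exact (integral_congr_ae (Eventually.of_forall fun q => by
    beta_reduce; rw [← hlap]; rfl)).trans h

theorem WeaklyHarmonicProdOn.contDiffOn_and_lapProd_eq_zero {u : Ed d × ℝ → ℝ}
    {D : Set (Ed d × ℝ)} (hu : WeaklyHarmonicProdOn u D) (hD : IsOpen D) (huc : ContinuousOn u D) :
    ContDiffOn ℝ 2 u D ∧ ∀ p ∈ D, lapProd d u p = 0 := by
  set e := euclideanProdEquiv d
  have hharm := hu.comp_euclideanProdEquiv.harmonicOnNhd
    (hD.preimage e.continuous) (huc.comp e.continuous.continuousOn fun _ hq => hq)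
  have hpre (p : Ed d × ℝ) (hp : p ∈ D) : e.symm p ∈ e ⁻¹' D := by simpa using hp
  refine ⟨?_, fun p hp => ?_⟩
  · have h := hharm.contDiffOn.comp e.symm.contDiff.contDiffOn hpre
    rwa [Function.comp_assoc, e.self_comp_symm, Function.comp_id] at h
  · have h := (hharm _ (hpre p hp)).2.self_of_nhds
    rwa [laplacian_comp_euclideanProdEquiv, e.apply_symm_apply] at h

end Product

section Weight

lemma sq_add_sq_rpow_le_rpow {r s : ℝ} (hr : 0 < r) (hs : 0 ≤ s) (t : ℝ) :
    (r ^ 2 + t ^ 2) ^ (-s / 2) ≤ r ^ (-s) := by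
  have h : r ^ (-s) = (r ^ 2) ^ (-s / 2) := by
    rw [← rpow_natCast, ← rpow_mul hr.le]; congr 1; push_cast; ring
  rw [h]
  exact rpow_le_rpow_of_nonpos (by positivity) (by linarith [sq_nonneg t]) (by linarith)

lemma exists_sq_add_sq_rpow_le {δ s : ℝ} (hδ : 0 < δ) (hs : 0 ≤ s) :
    ∃ C > 0, ∀ t, δ ≤ t → ∀ r, 0 ≤ r → (r ^ 2 + t ^ 2) ^ (-s / 2) ≤ C * (1 + r) ^ (-s) := by
  set m : ℝ := min 1 (δ ^ 2) / 2 with hm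
  have hm0 : 0 < m := by positivity
  refine ⟨m ^ (-s / 2), by positivity, fun t ht r hr => ?_⟩
  have h : (1 + r) ^ (-s) = ((1 + r) ^ 2) ^ (-s / 2) := by
    rw [← rpow_natCast, ← rpow_mul (by positivity)]; congr 1; push_cast; ring
  have hδt : δ ^ 2 ≤ t ^ 2 := by gcongr
  have hm1 : m ≤ 1 / 2 := by linarith [min_le_left 1 (δ ^ 2)]
  have hmt : m ≤ t ^ 2 / 2 := by linarith [min_le_right 1 (δ ^ 2)]
  rw [h, ← mul_rpow hm0.le (by positivity)]
  refine rpow_le_rpow_of_nonpos (by positivity) ?_ (by linarith)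
  nlinarith [sq_nonneg (1 - r), sq_nonneg r]

lemma exists_rpow_neg_le_one_add_rpow_neg {η s : ℝ} (hη : 0 < η) (hs : 0 ≤ s) :
    ∃ C > 0, ∀ r, η ≤ r → r ^ (-s) ≤ C * (1 + r) ^ (-s) := by
  refine ⟨(η / (1 + η)) ^ (-s), by positivity, fun r hr => ?_⟩
  have hr0 : 0 < r := hη.trans_le hr
  rw [← mul_rpow (by positivity) (by positivity)]
  refine rpow_le_rpow_of_nonpos (by positivity) ?_ (by linarith)
  rw [div_mul_eq_mul_div, div_le_iff₀ (by positivity)]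
  linarith

/-- A form of **Peetre's inequality**. -/
lemma one_add_norm_sub_rpow_neg_le {G : Type*} [SeminormedAddCommGroup G] {s : ℝ} (hs : 0 ≤ s)
    (x z : G) : (1 + ‖x - z‖) ^ (-s) ≤ (1 + ‖x‖) ^ s * (1 + ‖z‖) ^ (-s) := by
  have hle : 1 + ‖z‖ ≤ (1 + ‖x‖) * (1 + ‖x - z‖) := by
    have : ‖z‖ ≤ ‖x‖ + ‖x - z‖ := by simpa using norm_sub_le x (x - z)
    nlinarith [norm_nonneg x, norm_nonneg (x - z)]
  calc (1 + ‖x - z‖) ^ (-s)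
      = (1 + ‖x‖) ^ s * ((1 + ‖x‖) * (1 + ‖x - z‖)) ^ (-s) := by
        rw [mul_rpow (by positivity) (by positivity), ← mul_assoc, ← rpow_add (by positivity)]
        simp
    _ ≤ (1 + ‖x‖) ^ s * (1 + ‖z‖) ^ (-s) := by
        gcongr ?_ * ?_
        exact rpow_le_rpow_of_nonpos (by positivity) hle (neg_nonpos.2 hs)

/-- The weight `(1 + |x|) ^ (-d - 1)` against which `Φ` is integrable. -/
noncomputable def decayWeight (d : ℕ) (x : Ed d) : ℝ := (1 + ‖x‖) ^ (-((d : ℝ) + 1))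

variable {d : ℕ}

lemma decayWeight_pos (x : Ed d) : 0 < decayWeight d x := rpow_pos_of_pos (by positivity) _

@[fun_prop]
lemma continuous_decayWeight : Continuous (decayWeight d) :=
  (continuous_const.add continuous_norm).rpow_const fun x =>
    Or.inl (by positivity : (0 : ℝ) < 1 + ‖x‖).ne'

lemma integrable_decayWeight (d : ℕ) : Integrable (decayWeight d) :=
  integrable_one_add_norm (by simp)

lemma decayWeight_sub_le (x z : Ed d) :
    decayWeight d (x - z) ≤ (1 + ‖x‖) ^ ((d : ℝ) + 1) * decayWeight d z :=
  one_add_norm_sub_rpow_neg_le (by positivity) x z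

end Weight

section GammaIntegral

variable {V : Type*} [NormedAddCommGroup V] [InnerProductSpace ℝ V] [FiniteDimensional ℝ V]
  [MeasurableSpace V] [BorelSpace V]

lemma integrable_exp_neg_norm_sq_add_one_mul {u : ℝ} (hu : 0 < u) :
    Integrable fun x : V => exp (-((‖x‖ ^ 2 + 1) * u)) := by
  have hgauss : Integrable fun x : V => exp (-u * ‖x‖ ^ 2) := Integrable.of_integral_ne_zero (by
    rw [GaussianFourier.integral_rexp_neg_mul_sq_norm hu]; positivity)
  refine (hgauss.mul_const (exp (-u))).congr (Eventually.of_forall fun x => ?_)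
  simp only [← exp_add]
  ring_nf

lemma integral_exp_neg_norm_sq_add_one_mul {u : ℝ} (hu : 0 < u) :
    ∫ x : V, exp (-((‖x‖ ^ 2 + 1) * u)) =
      (π / u) ^ (Module.finrank ℝ V / 2 : ℝ) * exp (-u) := by
  rw [← GaussianFourier.integral_rexp_neg_mul_sq_norm hu, ← integral_mul_const]
  refine integral_congr_ae (Eventually.of_forall fun x => ?_)
  simp only [← exp_add]
  ring_nf

lemma integral_rpow_mul_exp_neg_norm_sq_add_one_mul (a : ℝ) {u : ℝ} (hu : 0 < u) :
    ∫ x : V, u ^ (a - 1) * exp (-((‖x‖ ^ 2 + 1) * u)) =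
      π ^ (Module.finrank ℝ V / 2 : ℝ) *
        (exp (-u) * u ^ (a - Module.finrank ℝ V / 2 - 1)) := by
  have hpow : u ^ (a - 1) =
      u ^ (a - Module.finrank ℝ V / 2 - 1) * u ^ (Module.finrank ℝ V / 2 : ℝ) := by
    rw [← rpow_add hu]; ring_nf
  have hne : u ^ (Module.finrank ℝ V / 2 : ℝ) ≠ 0 := by positivity
  rw [integral_const_mul, integral_exp_neg_norm_sq_add_one_mul hu, div_rpow pi_pos.le hu.le, hpow]
  field_simp

variable (V) in
lemma integrable_prod_rpow_mul_exp_neg_norm_sq_add_one_mul {a : ℝ}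
    (ha : (Module.finrank ℝ V / 2 : ℝ) < a) :
    Integrable (fun q : V × ℝ => q.2 ^ (a - 1) * exp (-((‖q.1‖ ^ 2 + 1) * q.2)))
      ((volume : Measure V).prod (volume.restrict (Ioi 0))) := by
  have hmeas : Measurable fun q : V × ℝ => q.2 ^ (a - 1) * exp (-((‖q.1‖ ^ 2 + 1) * q.2)) := by
    fun_prop
  refine (integrable_prod_iff' hmeas.aestronglyMeasurable).2 ⟨?_, ?_⟩
  · filter_upwards [ae_restrict_mem measurableSet_Ioi] with u hu
    exact (integrable_exp_neg_norm_sq_add_one_mul hu).const_mul _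
  · refine ((Real.GammaIntegral_convergent (sub_pos.2 ha)).const_mul
      (π ^ (Module.finrank ℝ V / 2 : ℝ))).congr ?_
    filter_upwards [ae_restrict_mem measurableSet_Ioi] with u hu
    have hu : 0 < u := hu
    rw [← integral_rpow_mul_exp_neg_norm_sq_add_one_mul a hu]
    exact integral_congr_ae (Eventually.of_forall fun x => (norm_of_nonneg (by positivity)).symm)

variable (V) in
/-- Fubini for `u ^ (a - 1) * exp (-(|x| ^ 2 + 1) * u)` on `V × (0, ∞)`. -/
lemma Gamma_mul_integral_norm_sq_add_one_rpow_neg {a : ℝ}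
    (ha : (Module.finrank ℝ V / 2 : ℝ) < a) :
    Real.Gamma a * ∫ x : V, (‖x‖ ^ 2 + 1) ^ (-a) =
      π ^ (Module.finrank ℝ V / 2 : ℝ) * Real.Gamma (a - Module.finrank ℝ V / 2) := by
  have hI := integrable_prod_rpow_mul_exp_neg_norm_sq_add_one_mul V ha
  have ha0 : 0 < a := lt_of_le_of_lt (by positivity) ha
  have hvert (x : V) : ∫ u in Ioi (0 : ℝ), u ^ (a - 1) * exp (-((‖x‖ ^ 2 + 1) * u)) =
      Real.Gamma a * (‖x‖ ^ 2 + 1) ^ (-a) := by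
    rw [Real.integral_rpow_mul_exp_neg_mul_Ioi ha0 (by positivity), mul_comm, one_div,
      inv_rpow (by positivity), ← rpow_neg (by positivity)]
  have hhor := setIntegral_congr_fun (μ := volume) (measurableSet_Ioi (a := (0 : ℝ))) fun u hu =>
    integral_rpow_mul_exp_neg_norm_sq_add_one_mul (V := V) a hu
  simp only [← integral_const_mul, ← hvert]
  rw [Real.Gamma_eq_integral (sub_pos.2 ha), ← integral_const_mul, ← hhor]
  exact (integral_prod _ hI).symm.trans (integral_prod_symm _ hI)

end GammaIntegral

section PoissonKernel

/-- The constant of the Poisson kernel of `ℝ^d`, which is `A_{d,1}` too. -/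
noncomputable def poissonConst (d : ℕ) : ℝ :=
  Real.Gamma (((d : ℝ) + 1) / 2) / π ^ (((d : ℝ) + 1) / 2)

/-- The derivative in `t` of the Poisson kernel `P_t(x)`, in the form that also makes sense at
`t = 0`, `x ≠ 0`. -/
noncomputable def poissonKDeriv (d : ℕ) (t : ℝ) (x : Ed d) : ℝ :=
  poissonConst d * (‖x‖ ^ 2 - d * t ^ 2) * (‖x‖ ^ 2 + t ^ 2) ^ (-((d : ℝ) + 1) / 2 - 1)

variable {d : ℕ}

lemma poissonConst_pos (d : ℕ) : 0 < poissonConst d :=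
  div_pos (Real.Gamma_pos_of_pos (by positivity)) (by positivity)

lemma poissonK_eq (t : ℝ) (x : Ed d) :
    poissonK d t x = poissonConst d * t * (‖x‖ ^ 2 + t ^ 2) ^ (-((d : ℝ) + 1) / 2) := rfl

lemma poissonK_nonneg {t : ℝ} (ht : 0 ≤ t) (x : Ed d) : 0 ≤ poissonK d t x := by
  rw [poissonK_eq]
  have := poissonConst_pos d
  positivity

lemma poissonK_neg (t : ℝ) (x : Ed d) : poissonK d t (-x) = poissonK d t x := by
  simp [poissonK_eq]

lemma poissonKDeriv_neg (t : ℝ) (x : Ed d) : poissonKDeriv d t (-x) = poissonKDeriv d t x := by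
  simp [poissonKDeriv]

lemma hasDerivAt_norm_sq_add_sq_rpow {V : Type*} [SeminormedAddGroup V] {t : ℝ} (ht : 0 < t)
    (x : V) (p : ℝ) :
    HasDerivAt (fun t : ℝ => (‖x‖ ^ 2 + t ^ 2) ^ p)
      (2 * t * p * (‖x‖ ^ 2 + t ^ 2) ^ (p - 1)) t := by
  simpa using ((hasDerivAt_pow 2 t).const_add (‖x‖ ^ 2)).rpow_const (p := p)
    (Or.inl (by positivity))

lemma rpow_eq_mul_rpow_sub_one {s : ℝ} (hs : 0 < s) (p : ℝ) : s ^ p = s * s ^ (p - 1) := by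
  rw [rpow_sub_one hs.ne']; field_simp

lemma hasDerivAt_poissonK {t : ℝ} (ht : 0 < t) (x : Ed d) :
    HasDerivAt (fun t => poissonK d t x) (poissonKDeriv d t x) t := by
  have h := ((hasDerivAt_id t).const_mul (poissonConst d)).fun_mul
    (hasDerivAt_norm_sq_add_sq_rpow ht x (-((d : ℝ) + 1) / 2))
  convert! h using 1
  simp only [poissonKDeriv, id]
  rw [rpow_eq_mul_rpow_sub_one (s := ‖x‖ ^ 2 + t ^ 2) (by positivity) (-((d : ℝ) + 1) / 2)]
  ring

lemma continuousAt_uncurry_poissonK {t : ℝ} (ht : 0 < t) (x : Ed d) :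
    ContinuousAt (fun p : Ed d × ℝ => poissonK d p.2 p.1) (x, t) := by
  refine ContinuousAt.mul (by fun_prop) (ContinuousAt.rpow_const (by fun_prop) (Or.inl ?_))
  positivity

lemma continuousAt_uncurry_poissonKDeriv {p : Ed d × ℝ} (hp : p ≠ 0) :
    ContinuousAt (fun p : Ed d × ℝ => poissonKDeriv d p.2 p.1) p := by
  refine ContinuousAt.mul (by fun_prop) (ContinuousAt.rpow_const (by fun_prop) (Or.inl ?_))
  contrapose! hp
  obtain ⟨h1, h2⟩ := (add_eq_zero_iff_of_nonneg (sq_nonneg _) (sq_nonneg _)).1 hp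
  exact Prod.ext (norm_eq_zero.1 (pow_eq_zero_iff two_ne_zero |>.1 h1))
    (pow_eq_zero_iff two_ne_zero |>.1 h2)

lemma continuous_poissonK {t : ℝ} (ht : 0 < t) : Continuous (poissonK d t) :=
  continuous_iff_continuousAt.2 fun x =>
    (continuousAt_uncurry_poissonK ht x).comp (f := fun x => (x, t)) (by fun_prop)

lemma continuous_poissonKDeriv {t : ℝ} (ht : 0 < t) : Continuous (poissonKDeriv d t) :=
  continuous_iff_continuousAt.2 fun x =>
    (continuousAt_uncurry_poissonKDeriv (p := (x, t)) (by simp [ht.ne'])).comp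
      (f := fun x => (x, t)) (by fun_prop)

lemma abs_poissonKDeriv_le {t : ℝ} (ht : 0 < t) (x : Ed d) :
    |poissonKDeriv d t x| ≤ (d + 1) / t * poissonK d t x := by
  have hc := poissonConst_pos d
  have hfactor : |‖x‖ ^ 2 - d * t ^ 2| ≤ (d + 1) * (‖x‖ ^ 2 + t ^ 2) := by
    have : (0 : ℝ) ≤ d * ‖x‖ ^ 2 := by positivity
    have : (0 : ℝ) ≤ d * t ^ 2 := by positivity
    rw [abs_le]
    constructor <;> nlinarith [sq_nonneg ‖x‖, sq_nonneg t]
  have hpow := rpow_eq_mul_rpow_sub_one (s := ‖x‖ ^ 2 + t ^ 2) (by positivity)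
    (-((d : ℝ) + 1) / 2)
  calc |poissonKDeriv d t x|
      = poissonConst d * |‖x‖ ^ 2 - d * t ^ 2| *
          (‖x‖ ^ 2 + t ^ 2) ^ (-((d : ℝ) + 1) / 2 - 1) := by
        rw [poissonKDeriv, abs_mul, abs_mul, abs_of_pos hc,
            abs_of_nonneg (a := (‖x‖ ^ 2 + t ^ 2) ^ _) (by positivity)]
    _ ≤ poissonConst d * ((d + 1) * (‖x‖ ^ 2 + t ^ 2)) *
          (‖x‖ ^ 2 + t ^ 2) ^ (-((d : ℝ) + 1) / 2 - 1) := by gcongr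
    _ = (d + 1) / t * poissonK d t x := by
        rw [poissonK_eq, hpow]
        field_simp

lemma exists_abs_poissonK_le_decayWeight {δ : ℝ} (hδ : 0 < δ) (M : ℝ) :
    ∃ C, 0 ≤ C ∧ ∀ t ∈ Icc δ M, ∀ x : Ed d, |poissonK d t x| ≤ C * decayWeight d x := by
  obtain ⟨C, hC, h⟩ := exists_sq_add_sq_rpow_le hδ (show (0 : ℝ) ≤ d + 1 by positivity)
  have hc := poissonConst_pos d
  refine ⟨poissonConst d * |M| * C, by positivity, fun t ht x => ?_⟩
  have ht0 : 0 < t := hδ.trans_le ht.1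
  rw [abs_of_nonneg (poissonK_nonneg ht0.le x), poissonK_eq, mul_assoc _ C]
  gcongr
  · exact ht.2.trans (le_abs_self M)
  · exact h t ht.1 ‖x‖ (norm_nonneg x)

lemma exists_abs_poissonKDeriv_le_decayWeight {δ : ℝ} (hδ : 0 < δ) (M : ℝ) :
    ∃ C, 0 ≤ C ∧ ∀ t ∈ Icc δ M, ∀ x : Ed d, |poissonKDeriv d t x| ≤ C * decayWeight d x := by
  obtain ⟨C, hC, h⟩ := exists_abs_poissonK_le_decayWeight (d := d) hδ M
  refine ⟨(d + 1) / δ * C, by positivity, fun t ht x => ?_⟩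
  have ht0 : 0 < t := hδ.trans_le ht.1
  calc |poissonKDeriv d t x| ≤ (d + 1) / t * poissonK d t x := abs_poissonKDeriv_le ht0 x
    _ ≤ (d + 1) / δ * (C * decayWeight d x) :=
        mul_le_mul (by gcongr; exact ht.1) ((le_abs_self _).trans (h t ht x))
          (poissonK_nonneg ht0.le x) (by positivity)
    _ = (d + 1) / δ * C * decayWeight d x := by ring

lemma integrable_of_abs_le_decayWeight {κ : Ed d → ℝ} (hκ : AEStronglyMeasurable κ) {C : ℝ}
    (hC : ∀ w, |κ w| ≤ C * decayWeight d w) : Integrable κ :=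
  ((integrable_decayWeight d).const_mul C).mono' hκ (Eventually.of_forall hC)

lemma integrable_poissonK {t : ℝ} (ht : 0 < t) : Integrable (poissonK d t) :=
  have ⟨_, _, h⟩ := exists_abs_poissonK_le_decayWeight ht t
  integrable_of_abs_le_decayWeight (continuous_poissonK ht).aestronglyMeasurable
    (h t ⟨le_rfl, le_rfl⟩)

lemma poissonK_eq_smul {t : ℝ} (ht : 0 < t) (x : Ed d) :
    poissonK d t x = (t ^ d)⁻¹ * poissonK d 1 (t⁻¹ • x) := by
  have hnorm : ‖t⁻¹ • x‖ ^ 2 + 1 ^ 2 = (t ^ 2)⁻¹ * (‖x‖ ^ 2 + t ^ 2) := by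
    rw [norm_smul, norm_of_nonneg (by positivity)]; field_simp
  have hpow : ((t ^ 2)⁻¹) ^ (-((d : ℝ) + 1) / 2) = t ^ (d + 1) := by
    rw [← rpow_natCast t 2, ← rpow_neg ht.le, ← rpow_mul ht.le, ← rpow_natCast t (d + 1)]
    congr 1; push_cast; ring
  rw [poissonK_eq, poissonK_eq, hnorm, mul_rpow (by positivity) (by positivity), hpow]
  field_simp
  ring

lemma integral_poissonK_one : ∫ x : Ed d, poissonK d 1 x = 1 := by
  have h := Gamma_mul_integral_norm_sq_add_one_rpow_neg (Ed d) (a := ((d : ℝ) + 1) / 2)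
    (by rw [finrank_euclideanSpace_fin]; linarith)
  rw [finrank_euclideanSpace_fin, show ((d : ℝ) + 1) / 2 - d / 2 = 1 / 2 by ring,
    Real.Gamma_one_half_eq, sqrt_eq_rpow, ← rpow_add pi_pos, ← add_div] at h
  simp only [poissonK_eq, one_pow, mul_one, integral_const_mul, neg_div]
  rw [poissonConst, div_mul_eq_mul_div, h, div_self (by positivity)]

lemma integral_poissonK {t : ℝ} (ht : 0 < t) : ∫ x : Ed d, poissonK d t x = 1 := by
  have h := Measure.integral_comp_inv_smul_of_nonneg (volume : Measure (Ed d)) (poissonK d 1) ht.le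
  rw [integral_poissonK_one, finrank_euclideanSpace_fin, smul_eq_mul, mul_one] at h
  simp only [poissonK_eq_smul ht]
  rw [integral_const_mul, h]
  exact inv_mul_cancel₀ (by positivity)

lemma integrable_and_integral_poissonKDeriv {t : ℝ} (ht : 0 < t) :
    Integrable (poissonKDeriv d t) ∧ ∫ x : Ed d, poissonKDeriv d t x = 0 := by
  obtain ⟨C, -, h⟩ := exists_abs_poissonKDeriv_le_decayWeight (d := d) (half_pos ht) (2 * t)
  have hmem : Ioo (t / 2) (2 * t) ∈ 𝓝 t := isOpen_Ioo.mem_nhds ⟨by linarith, by linarith⟩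
  obtain ⟨hint, hderiv⟩ := hasDerivAt_integral_of_dominated_loc_of_deriv_le (μ := volume)
    (F := fun t x => poissonK d t x) (F' := fun t x => poissonKDeriv d t x) hmem
    ((lt_mem_nhds ht).mono fun s hs => (continuous_poissonK hs).aestronglyMeasurable)
    (integrable_poissonK ht) (continuous_poissonKDeriv ht).aestronglyMeasurable
    (Eventually.of_forall fun x s hs => h s ⟨hs.1.le, hs.2.le⟩ x)
    ((integrable_decayWeight d).const_mul C)
    (Eventually.of_forall fun x s hs => hasDerivAt_poissonK (by linarith [hs.1]) x)
  have hone : (fun t => ∫ x : Ed d, poissonK d t x) =ᶠ[𝓝 t] fun _ => 1 :=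
    (lt_mem_nhds ht).mono fun s hs => integral_poissonK hs
  exact ⟨hint, (hderiv.congr_of_eventuallyEq hone.symm).unique (hasDerivAt_const t 1)⟩

end PoissonKernel

section SecondDifference

/-- The symmetric second difference of `Φ` at `x` with step `w`. -/
def secDiff {G : Type*} [AddCommGroup G] (Φ : G → ℝ) (x w : G) : ℝ :=
  Φ (x + w) + Φ (x - w) - 2 * Φ x

lemma secDiff_zero {G : Type*} [AddCommGroup G] (Φ : G → ℝ) (x : G) : secDiff Φ x 0 = 0 := by
  simp [secDiff, two_mul]

lemma abs_secDiff_le {G : Type*} [AddCommGroup G] (Φ : G → ℝ) (x w : G) :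
    |secDiff Φ x w| ≤ |Φ (x + w)| + |Φ (x - w)| + 2 * |Φ x| := by
  refine (abs_sub _ _).trans ?_
  rw [abs_mul, abs_two]
  gcongr
  exact abs_add_le _ _

variable {V : Type*} [NormedAddCommGroup V] [NormedSpace ℝ V] {Φ : V → ℝ}

lemma hasFDerivAt_secDiff {x v : V} (h₁ : DifferentiableAt ℝ Φ (x + v))
    (h₂ : DifferentiableAt ℝ Φ (x - v)) :
    HasFDerivAt (secDiff Φ x) (fderiv ℝ Φ (x + v) - fderiv ℝ Φ (x - v)) v := by
  have hadd : HasFDerivAt (fun v => Φ (x + v)) (fderiv ℝ Φ (x + v)) v := by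
    simpa using! h₁.hasFDerivAt.comp v ((hasFDerivAt_id v).const_add x)
  have hsub : HasFDerivAt (fun v => Φ (x - v)) (-fderiv ℝ Φ (x - v)) v := by
    simpa using! h₂.hasFDerivAt.comp v ((hasFDerivAt_id v).const_sub x)
  rw [sub_eq_add_neg]
  exact (hadd.add hsub).sub_const (2 * Φ x)

lemma abs_secDiff_le_of_lipschitzOnWith_fderiv {s : Set V} {K : NNReal}
    (hdiff : ∀ y ∈ s, DifferentiableAt ℝ Φ y) (hK : LipschitzOnWith K (fderiv ℝ Φ) s) {x w : V}
    (hs : closedBall x ‖w‖ ⊆ s) : |secDiff Φ x w| ≤ 2 * K * ‖w‖ ^ 2 := by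
  have hmem (v : V) (hv : v ∈ closedBall (0 : V) ‖w‖) : x + v ∈ s ∧ x - v ∈ s :=
    ⟨hs (by simpa using hv), hs (by simpa using hv)⟩
  have hderiv (v : V) (hv : v ∈ closedBall (0 : V) ‖w‖) :
      ‖fderiv ℝ Φ (x + v) - fderiv ℝ Φ (x - v)‖ ≤ 2 * K * ‖w‖ := by
    obtain ⟨h₁, h₂⟩ := hmem v hv
    have hv' : ‖v‖ ≤ ‖w‖ := by simpa using hv
    calc ‖fderiv ℝ Φ (x + v) - fderiv ℝ Φ (x - v)‖ ≤ K * ‖x + v - (x - v)‖ := hK.norm_sub_le h₁ h₂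
      _ = 2 * K * ‖v‖ := by
        rw [show x + v - (x - v) = (2 : ℝ) • v by rw [two_smul]; abel, norm_smul, norm_ofNat]
        ring
      _ ≤ 2 * K * ‖w‖ := by gcongr
  have h := (convex_closedBall (0 : V) ‖w‖).norm_image_sub_le_of_norm_hasFDerivWithin_le
    (fun v hv => (hasFDerivAt_secDiff (hdiff _ (hmem v hv).1)
      (hdiff _ (hmem v hv).2)).hasFDerivWithinAt) hderiv
    (x := 0) (y := w) (by simp) (by simp)
  rw [secDiff_zero, sub_zero, sub_zero, norm_eq_abs] at h
  linarith

lemma exists_abs_secDiff_le_of_contDiffAt {x₀ : V} (h : ContDiffAt ℝ 2 Φ x₀) :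
    ∃ M, ∃ η > 0, ∀ x ∈ ball x₀ η, ∀ w, ‖w‖ ≤ η → |secDiff Φ x w| ≤ M * ‖w‖ ^ 2 := by
  obtain ⟨K, t, ht, hK⟩ := (h.fderiv_right (m := 1) (by norm_num)).exists_lipschitzOnWith
  have hdiff : ∀ᶠ y in 𝓝 x₀, DifferentiableAt ℝ Φ y :=
    (h.eventually (by simp)).mono fun y hy => hy.differentiableAt (by simp)
  obtain ⟨ε, hε, hsub⟩ := Metric.mem_nhds_iff.1 (inter_mem ht hdiff)
  refine ⟨2 * K, ε / 2, by positivity, fun x hx w hw => ?_⟩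
  refine abs_secDiff_le_of_lipschitzOnWith_fderiv (s := ball x₀ ε) (fun y hy => (hsub hy).2)
    (hK.mono fun y hy => (hsub hy).1) fun y hy => ?_
  have := dist_triangle y x x₀
  rw [mem_ball] at hx ⊢
  rw [mem_closedBall] at hy
  linarith

end SecondDifference

section EvenKernel

variable {G : Type*} [AddCommGroup G] [MeasurableSpace G] [MeasurableAdd₂ G] [MeasurableNeg G]
  {μ : Measure G} [μ.IsAddLeftInvariant] [μ.IsNegInvariant] {κ Φ : G → ℝ} {x : G}

lemma integrable_and_integral_even_mul_add_sub (heven : ∀ w, κ (-w) = κ w)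
    (hκΦ : Integrable (fun y => κ (x - y) * Φ y) μ) :
    Integrable (fun w => κ w * (Φ (x + w) + Φ (x - w))) μ ∧
      ∫ w, κ w * (Φ (x + w) + Φ (x - w)) ∂μ = 2 * ∫ y, κ (x - y) * Φ y ∂μ := by
  have hsub : Integrable (fun w => κ w * Φ (x - w)) μ := by simpa using hκΦ.comp_sub_left x
  have hadd : Integrable (fun w => κ w * Φ (x + w)) μ := by simpa [heven] using hsub.comp_neg
  have hsub_eq : ∫ w, κ w * Φ (x - w) ∂μ = ∫ y, κ (x - y) * Φ y ∂μ := by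
    simpa using integral_sub_left_eq_self (fun y => κ (x - y) * Φ y) μ x
  have hadd_eq : ∫ w, κ w * Φ (x + w) ∂μ = ∫ w, κ w * Φ (x - w) ∂μ := by
    simpa [heven] using integral_neg_eq_self (fun w => κ w * Φ (x - w)) μ
  simp only [mul_add]
  exact ⟨hadd.add hsub, by rw [integral_add hadd hsub, hadd_eq, hsub_eq, two_mul]⟩

lemma integrable_even_mul_secDiff (heven : ∀ w, κ (-w) = κ w) (hκ : Integrable κ μ)
    (hκΦ : Integrable (fun y => κ (x - y) * Φ y) μ) :
    Integrable (fun w => κ w * secDiff Φ x w) μ := by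
  simp only [secDiff, mul_sub]
  exact (integrable_and_integral_even_mul_add_sub heven hκΦ).1.sub (hκ.mul_const _)

lemma integral_even_mul_eq_secDiff (heven : ∀ w, κ (-w) = κ w) (hκ : Integrable κ μ)
    (hκΦ : Integrable (fun y => κ (x - y) * Φ y) μ) :
    ∫ y, κ (x - y) * Φ y ∂μ = (∫ w, κ w * secDiff Φ x w ∂μ) / 2 + Φ x * ∫ w, κ w ∂μ := by
  obtain ⟨hint, heq⟩ := integrable_and_integral_even_mul_add_sub heven hκΦ
  simp only [secDiff, mul_sub]
  rw [integral_sub hint (hκ.mul_const _), heq, integral_mul_const]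
  ring

lemma integral_abs_even_mul_secDiff_le (heven : ∀ w, κ (-w) = κ w) (hκ : Integrable κ μ)
    (hκΦ : Integrable (fun y => κ (x - y) * Φ y) μ) :
    ∫ w, |κ w * secDiff Φ x w| ∂μ ≤
      2 * ∫ y, |κ (x - y) * Φ y| ∂μ + 2 * |Φ x| * ∫ w, |κ w| ∂μ := by
  have habs : Integrable (fun y => |κ (x - y)| * |Φ y|) μ := by simpa [abs_mul] using hκΦ.abs
  obtain ⟨hint, heq⟩ := integrable_and_integral_even_mul_add_sub (κ := fun w => |κ w|)
    (Φ := fun y => |Φ y|) (fun w => by rw [heven]) habs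
  simp only [abs_mul]
  rw [← heq, ← integral_const_mul, ← integral_add hint (hκ.abs.const_mul _)]
  have hS : Integrable (fun w => |κ w| * |secDiff Φ x w|) μ := by
    simpa [abs_mul] using (integrable_even_mul_secDiff heven hκ hκΦ).abs
  refine integral_mono hS (hint.add (hκ.abs.const_mul _)) fun w => ?_
  calc |κ w| * |secDiff Φ x w| ≤ |κ w| * (|Φ (x + w)| + |Φ (x - w)| + 2 * |Φ x|) := by
        gcongr
        exact abs_secDiff_le Φ x w
    _ = |κ w| * (|Φ (x + w)| + |Φ (x - w)|) + 2 * |Φ x| * |κ w| := by ring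

end EvenKernel

section WeightedIntegrability

variable {d : ℕ} {Φ κ : Ed d → ℝ} {C : ℝ}

/-- `∫ |Φ(y)| (1 + |y|) ^ (-d - 1) dy < ∞`, the condition under which the Poisson integrals of `Φ`
converge. -/
def PoissonIntegrable (Φ : Ed d → ℝ) : Prop := Integrable fun y => decayWeight d y * Φ y

lemma poissonIntegrable_of_integrable_abs_mul (hΦ : AEStronglyMeasurable Φ)
    (hint : Integrable fun y : Ed d => |Φ y| * (1 + ‖y‖) ^ (-(d : ℝ) - 1)) :
    PoissonIntegrable Φ := by
  refine hint.mono' (continuous_decayWeight.aestronglyMeasurable.mul hΦ)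
    (Eventually.of_forall fun y => ?_)
  rw [norm_mul, norm_of_nonneg (decayWeight_pos y).le, decayWeight, neg_add', mul_comm, norm_eq_abs]

lemma PoissonIntegrable.aestronglyMeasurable (hΦ : PoissonIntegrable Φ) :
    AEStronglyMeasurable Φ := by
  have h := (continuous_decayWeight.inv₀ fun y : Ed d =>
    (decayWeight_pos y).ne').aestronglyMeasurable (μ := volume) |>.mul
    (Integrable.aestronglyMeasurable hΦ)
  refine h.congr (Eventually.of_forall fun y => ?_)
  exact inv_mul_cancel_left₀ (decayWeight_pos y).ne' (Φ y)

lemma PoissonIntegrable.aestronglyMeasurable_secDiff (hΦ : PoissonIntegrable Φ) (x : Ed d) :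
    AEStronglyMeasurable (secDiff Φ x) :=
  ((hΦ.aestronglyMeasurable.comp_quasiMeasurePreserving
      (measurePreserving_add_left volume x).quasiMeasurePreserving).add
    (hΦ.aestronglyMeasurable.comp_quasiMeasurePreserving
      (quasiMeasurePreserving_sub_left volume x))).sub aestronglyMeasurable_const

lemma abs_kernel_sub_le (hC : ∀ w, |κ w| ≤ C * decayWeight d w) (x y : Ed d) :
    |κ (x - y)| ≤ C * (1 + ‖x‖) ^ ((d : ℝ) + 1) * decayWeight d y := by
  have hC0 : 0 ≤ C := nonneg_of_mul_nonneg_left ((abs_nonneg _).trans (hC 0)) (decayWeight_pos 0)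
  calc |κ (x - y)| ≤ C * decayWeight d (x - y) := hC _
    _ ≤ C * ((1 + ‖x‖) ^ ((d : ℝ) + 1) * decayWeight d y) := by gcongr; exact decayWeight_sub_le x y
    _ = C * (1 + ‖x‖) ^ ((d : ℝ) + 1) * decayWeight d y := (mul_assoc _ _ _).symm

lemma abs_kernel_mul_le (hC : ∀ w, |κ w| ≤ C * decayWeight d w) (Φ : Ed d → ℝ) (x y : Ed d) :
    |κ (x - y) * Φ y| ≤ C * (1 + ‖x‖) ^ ((d : ℝ) + 1) * |decayWeight d y * Φ y| := by
  rw [abs_mul, abs_mul, abs_of_pos (decayWeight_pos y), ← mul_assoc]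
  gcongr
  exact abs_kernel_sub_le hC x y

lemma PoissonIntegrable.integrable_kernel_mul (hΦ : PoissonIntegrable Φ)
    (hκ : AEStronglyMeasurable κ) (hC : ∀ w, |κ w| ≤ C * decayWeight d w) (x : Ed d) :
    Integrable fun y => κ (x - y) * Φ y :=
  (hΦ.abs.const_mul (C * (1 + ‖x‖) ^ ((d : ℝ) + 1))).mono'
    ((hκ.comp_quasiMeasurePreserving (quasiMeasurePreserving_sub_left volume x)).mul
      hΦ.aestronglyMeasurable) (Eventually.of_forall (abs_kernel_mul_le hC Φ x))

lemma PoissonIntegrable.integral_abs_even_mul_secDiff_le (hΦ : PoissonIntegrable Φ)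
    (hκ : AEStronglyMeasurable κ) (hC : ∀ w, |κ w| ≤ C * decayWeight d w)
    (heven : ∀ w, κ (-w) = κ w) (x : Ed d) :
    ∫ w, |κ w * secDiff Φ x w| ≤
      2 * (C * (1 + ‖x‖) ^ ((d : ℝ) + 1) * ∫ y, |decayWeight d y * Φ y|) +
        2 * |Φ x| * ∫ w, |κ w| := by
  have hint := hΦ.integrable_kernel_mul hκ hC x
  refine (PoissonExtension.integral_abs_even_mul_secDiff_le heven
    (integrable_of_abs_le_decayWeight hκ hC) hint).trans ?_
  rw [← integral_const_mul (C * _)]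
  gcongr 2 * ?_ + _
  exact integral_mono hint.abs (hΦ.abs.const_mul _) (abs_kernel_mul_le hC Φ x)

end WeightedIntegrability

section SingularKernel

variable {d : ℕ} {Φ : Ed d → ℝ}

/-- The kernel `|w| ^ (-d - 1)` of the half-Laplacian; its value at `w = 0` is `0`. -/
noncomputable def singularKernel (d : ℕ) (w : Ed d) : ℝ := ‖w‖ ^ (-((d : ℝ) + 1))

/-- The kernel `|w| ^ (-d - 1)` cut off at distance `ε` from its singularity, as in the principal
value defining the half-Laplacian. -/
noncomputable def truncKernel (d : ℕ) (ε : ℝ) : Ed d → ℝ :=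
  {w | ε < ‖w‖}.indicator (singularKernel d)

lemma singularKernel_nonneg (w : Ed d) : 0 ≤ singularKernel d w := by
  unfold singularKernel; positivity

lemma measurable_singularKernel : Measurable (singularKernel d) := by
  unfold singularKernel; fun_prop

lemma measurable_truncKernel (ε : ℝ) : Measurable (truncKernel d ε) :=
  measurable_singularKernel.indicator (measurableSet_lt measurable_const measurable_norm)

lemma truncKernel_neg (ε : ℝ) (w : Ed d) : truncKernel d ε (-w) = truncKernel d ε w := by
  simp [truncKernel, indicator, singularKernel]

lemma abs_truncKernel_le_singularKernel (ε : ℝ) (w : Ed d) :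
    |truncKernel d ε w| ≤ singularKernel d w := by
  simpa [abs_of_nonneg (singularKernel_nonneg w)] using!
    norm_indicator_le_norm_self (s := {w | ε < ‖w‖}) (singularKernel d) w

lemma exists_abs_truncKernel_le_decayWeight {ε : ℝ} (hε : 0 < ε) :
    ∃ C, ∀ w : Ed d, |truncKernel d ε w| ≤ C * decayWeight d w := by
  obtain ⟨C, hC, h⟩ := exists_rpow_neg_le_one_add_rpow_neg hε (show (0 : ℝ) ≤ d + 1 by positivity)
  refine ⟨C, fun w => ?_⟩
  by_cases hw : ε < ‖w‖
  · exact (abs_truncKernel_le_singularKernel ε w).trans (h ‖w‖ hw.le)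
  · have := decayWeight_pos w
    simp only [truncKernel, indicator, mem_ofPred_eq, hw, if_false, abs_zero]
    positivity

lemma locallyIntegrable_norm_sq_mul_singularKernel (d : ℕ) :
    LocallyIntegrable fun w : Ed d => ‖w‖ ^ 2 * singularKernel d w := by
  rcases d.eq_zero_or_pos with rfl | hd
  · simpa [Subsingleton.elim _ (0 : Ed 0)] using locallyIntegrable_zero
  refine locallyIntegrable_of_norm_le_rpow (C := 1) (α := (d : ℝ) - 1)
    (by rw [finrank_euclideanSpace_fin]; exact hd) (by simp) (Eventually.of_forall fun w => ?_)
    (Measurable.aestronglyMeasurable (by have := measurable_singularKernel (d := d); fun_prop))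
  rcases eq_or_ne w 0 with rfl | hw
  · simpa using rpow_nonneg le_rfl _
  · have hw' : 0 < ‖w‖ := norm_pos_iff.2 hw
    rw [norm_of_nonneg (mul_nonneg (sq_nonneg _) (singularKernel_nonneg w)), singularKernel,
      ← rpow_natCast, ← rpow_add hw', one_mul]
    exact le_of_eq (by congr 1; push_cast; ring)

/-- The second differences of `Φ` at `x` are absolutely integrable against `|w| ^ (-d - 1)`, with
integral at most `C`. Then `Δ^{1/2} Φ (x)` is an absolutely convergent integral. -/
def SecDiffMassLE (Φ : Ed d → ℝ) (C : ℝ) (x : Ed d) : Prop :=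
  Integrable (fun w => singularKernel d w * secDiff Φ x w) ∧
    ∫ w, |singularKernel d w * secDiff Φ x w| ≤ C

lemma integrableOn_and_setIntegral_near_le {x : Ed d} {M η : ℝ} (hΦ : PoissonIntegrable Φ)
    (hM : ∀ w, ‖w‖ ≤ η → |secDiff Φ x w| ≤ M * ‖w‖ ^ 2) :
    IntegrableOn (fun w => singularKernel d w * secDiff Φ x w) (closedBall 0 η) ∧
      ∫ w in closedBall 0 η, |singularKernel d w * secDiff Φ x w| ≤
        M * ∫ w in closedBall (0 : Ed d) η, ‖w‖ ^ 2 * singularKernel d w := by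
  have hdom : IntegrableOn (fun w : Ed d => M * (‖w‖ ^ 2 * singularKernel d w))
      (closedBall 0 η) :=
    ((locallyIntegrable_norm_sq_mul_singularKernel d).integrableOn_isCompact
      (isCompact_closedBall 0 η)).const_mul M
  have hle : ∀ w ∈ closedBall (0 : Ed d) η,
      |singularKernel d w * secDiff Φ x w| ≤ M * (‖w‖ ^ 2 * singularKernel d w) := fun w hw => by
    rw [abs_mul, abs_of_nonneg (singularKernel_nonneg w), mul_comm]
    refine (mul_le_mul_of_nonneg_right (hM w (by simpa using hw)) (singularKernel_nonneg w)).trans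
      (le_of_eq (mul_assoc _ _ _))
  have hint : IntegrableOn (fun w => singularKernel d w * secDiff Φ x w) (closedBall 0 η) :=
    Integrable.mono' hdom (measurable_singularKernel.aestronglyMeasurable.mul
      (hΦ.aestronglyMeasurable_secDiff x)).restrict
      ((ae_restrict_iff' measurableSet_closedBall).2 (Eventually.of_forall hle))
  refine ⟨hint, ?_⟩
  rw [← integral_const_mul]
  exact setIntegral_mono_on hint.abs hdom measurableSet_closedBall hle

lemma secDiffMassLE_of_abs_secDiff_le {x : Ed d} {M η B : ℝ} (hΦ : PoissonIntegrable Φ)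
    (hM : ∀ w, ‖w‖ ≤ η → |secDiff Φ x w| ≤ M * ‖w‖ ^ 2)
    (hB : ∀ w : Ed d, |truncKernel d η w| ≤ B * decayWeight d w) :
    SecDiffMassLE Φ (M * (∫ w in closedBall (0 : Ed d) η, ‖w‖ ^ 2 * singularKernel d w) +
      (2 * (B * (1 + ‖x‖) ^ ((d : ℝ) + 1) * ∫ y, |decayWeight d y * Φ y|) +
        2 * |Φ x| * ∫ w, |truncKernel d η w|)) x := by
  obtain ⟨hnear, hnear_le⟩ := integrableOn_and_setIntegral_near_le hΦ hM
  have hmeas := (measurable_truncKernel (d := d) η).aestronglyMeasurable (μ := volume)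
  have hfar : Integrable fun w => truncKernel d η w * secDiff Φ x w :=
    integrable_even_mul_secDiff (truncKernel_neg η) (integrable_of_abs_le_decayWeight hmeas hB)
      (hΦ.integrable_kernel_mul hmeas hB x)
  have htrunc (w : Ed d) (hw : w ∈ (closedBall (0 : Ed d) η)ᶜ) :
      truncKernel d η w * secDiff Φ x w = singularKernel d w * secDiff Φ x w := by
    rw [truncKernel, indicator_of_mem (by simpa using hw)]
  have hcompl : MeasurableSet (closedBall (0 : Ed d) η)ᶜ := measurableSet_closedBall.compl
  have hint : Integrable fun w => singularKernel d w * secDiff Φ x w := by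
    rw [← integrableOn_univ, ← union_compl_self (closedBall (0 : Ed d) η)]
    exact hnear.union (hfar.integrableOn.congr_fun htrunc hcompl)
  refine ⟨hint, ?_⟩
  rw [← integral_add_compl measurableSet_closedBall hint.abs]
  refine add_le_add hnear_le ?_
  rw [← setIntegral_congr_fun hcompl fun w hw => congrArg abs (htrunc w hw)]
  exact (setIntegral_le_integral hfar.abs (Eventually.of_forall fun w => abs_nonneg _)).trans
    (hΦ.integral_abs_even_mul_secDiff_le hmeas hB (truncKernel_neg η) x)

lemma exists_eventually_secDiffMassLE_of_contDiffAt {x₀ : Ed d} (hΦ : PoissonIntegrable Φ)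
    (h : ContDiffAt ℝ 2 Φ x₀) : ∃ C, ∀ᶠ x in 𝓝 x₀, SecDiffMassLE Φ C x := by
  obtain ⟨M, η, hη, hM⟩ := exists_abs_secDiff_le_of_contDiffAt h
  obtain ⟨B, hB⟩ := exists_abs_truncKernel_le_decayWeight (d := d) hη
  have hcont : ContinuousAt (fun x : Ed d =>
      M * (∫ w in closedBall (0 : Ed d) η, ‖w‖ ^ 2 * singularKernel d w) +
      (2 * (B * (1 + ‖x‖) ^ ((d : ℝ) + 1) * ∫ y, |decayWeight d y * Φ y|) +
        2 * |Φ x| * ∫ w, |truncKernel d η w|)) x₀ := by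
    have hpow : ContinuousAt (fun x : Ed d => (1 + ‖x‖) ^ ((d : ℝ) + 1)) x₀ :=
      ContinuousAt.rpow_const (by fun_prop) (Or.inl (by positivity))
    have := h.continuousAt
    fun_prop
  obtain ⟨C, hC⟩ := exists_gt (M * (∫ w in closedBall (0 : Ed d) η, ‖w‖ ^ 2 * singularKernel d w) +
      (2 * (B * (1 + ‖x₀‖) ^ ((d : ℝ) + 1) * ∫ y, |decayWeight d y * Φ y|) +
        2 * |Φ x₀| * ∫ w, |truncKernel d η w|))
  refine ⟨C, ?_⟩
  filter_upwards [hcont.eventually_lt_const hC, ball_mem_nhds x₀ hη] with x hxC hx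
  have hmass := secDiffMassLE_of_abs_secDiff_le hΦ (hM x hx) hB
  exact ⟨hmass.1, hmass.2.trans hxC.le⟩

end SingularKernel

section PoissonIntegral

variable {d : ℕ} {Φ : Ed d → ℝ}

/-- The Poisson integral `∫ P_t(x - y) Φ(y) dy` of `Φ` at the point `p = (x, t)`. -/
noncomputable def poissonIntegral (Φ : Ed d → ℝ) (p : Ed d × ℝ) : ℝ :=
  ∫ y, poissonK d p.2 (p.1 - y) * Φ y

/-- The derivative in `t` of the Poisson integral, `∫ ∂ₜP_t(x - y) Φ(y) dy`, at `p = (x, t)`. -/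
noncomputable def poissonDerivIntegral (Φ : Ed d → ℝ) (p : Ed d × ℝ) : ℝ :=
  ∫ y, poissonKDeriv d p.2 (p.1 - y) * Φ y

/-- The extension of `Φ` to `ℝ^d × ℝ` by its Poisson integrals, even in the last variable. -/
noncomputable def poissonExtension (Φ : Ed d → ℝ) (p : Ed d × ℝ) : ℝ :=
  if p.2 = 0 then Φ p.1 else poissonIntegral Φ (p.1, |p.2|)

lemma PoissonIntegrable.integrable_poissonK_mul (hΦ : PoissonIntegrable Φ) {t : ℝ} (ht : 0 < t)
    (x : Ed d) : Integrable fun y => poissonK d t (x - y) * Φ y :=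
  have ⟨_, _, h⟩ := exists_abs_poissonK_le_decayWeight ht t
  hΦ.integrable_kernel_mul (continuous_poissonK ht).aestronglyMeasurable (h t ⟨le_rfl, le_rfl⟩) x

lemma PoissonIntegrable.integrable_poissonKDeriv_mul (hΦ : PoissonIntegrable Φ) {t : ℝ}
    (ht : 0 < t) (x : Ed d) : Integrable fun y => poissonKDeriv d t (x - y) * Φ y :=
  have ⟨_, _, h⟩ := exists_abs_poissonKDeriv_le_decayWeight ht t
  hΦ.integrable_kernel_mul (continuous_poissonKDeriv ht).aestronglyMeasurable
    (h t ⟨le_rfl, le_rfl⟩) x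

lemma PoissonIntegrable.poissonIntegral_eq_secDiff (hΦ : PoissonIntegrable Φ) {t : ℝ}
    (ht : 0 < t) (x : Ed d) :
    poissonIntegral Φ (x, t) = (∫ w, poissonK d t w * secDiff Φ x w) / 2 + Φ x := by
  rw [poissonIntegral, integral_even_mul_eq_secDiff (poissonK_neg t) (integrable_poissonK ht)
    (hΦ.integrable_poissonK_mul ht x), integral_poissonK ht, mul_one]

lemma PoissonIntegrable.poissonDerivIntegral_eq_secDiff (hΦ : PoissonIntegrable Φ) {t : ℝ}
    (ht : 0 < t) (x : Ed d) :
    poissonDerivIntegral Φ (x, t) = (∫ w, poissonKDeriv d t w * secDiff Φ x w) / 2 := by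
  obtain ⟨hint, hzero⟩ := integrable_and_integral_poissonKDeriv (d := d) ht
  rw [poissonDerivIntegral, integral_even_mul_eq_secDiff (poissonKDeriv_neg t) hint
    (hΦ.integrable_poissonKDeriv_mul ht x), hzero, mul_zero, add_zero]

lemma abs_poissonK_le_singularKernel {t : ℝ} (ht : 0 ≤ t) {w : Ed d} (hw : w ≠ 0) :
    |poissonK d t w| ≤ poissonConst d * t * singularKernel d w := by
  have hc := poissonConst_pos d
  rw [abs_of_nonneg (poissonK_nonneg ht w), poissonK_eq]
  gcongr
  exact sq_add_sq_rpow_le_rpow (norm_pos_iff.2 hw) (by positivity) t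

lemma abs_poissonKDeriv_le_singularKernel {t : ℝ} (ht : 0 < t) {w : Ed d} (hw : w ≠ 0) :
    |poissonKDeriv d t w| ≤ poissonConst d * (d + 1) * singularKernel d w := by
  calc |poissonKDeriv d t w| ≤ (d + 1) / t * poissonK d t w := abs_poissonKDeriv_le ht w
    _ ≤ (d + 1) / t * (poissonConst d * t * singularKernel d w) := by
      gcongr
      exact (le_abs_self _).trans (abs_poissonK_le_singularKernel ht.le hw)
    _ = poissonConst d * (d + 1) * singularKernel d w := by field_simp

lemma abs_mul_secDiff_le {κ : Ed d → ℝ} {c : ℝ} (hκ : ∀ w ≠ 0, |κ w| ≤ c * singularKernel d w)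
    (Φ : Ed d → ℝ) (x w : Ed d) :
    |κ w * secDiff Φ x w| ≤ c * |singularKernel d w * secDiff Φ x w| := by
  rcases eq_or_ne w 0 with rfl | hw
  · simp [secDiff_zero]
  · rw [abs_mul, abs_mul, abs_of_nonneg (singularKernel_nonneg w), ← mul_assoc]
    gcongr
    exact hκ w hw

lemma SecDiffMassLE.abs_integral_mul_secDiff_le {κ : Ed d → ℝ} {c C : ℝ} {x : Ed d} (hc : 0 ≤ c)
    (hκ : ∀ w ≠ 0, |κ w| ≤ c * singularKernel d w) (hx : SecDiffMassLE Φ C x) :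
    |∫ w, κ w * secDiff Φ x w| ≤ c * C :=
  calc |∫ w, κ w * secDiff Φ x w| ≤ ∫ w, c * |singularKernel d w * secDiff Φ x w| :=
        (norm_eq_abs _).symm.trans_le (norm_integral_le_of_norm_le (hx.1.abs.const_mul c)
          (Eventually.of_forall (abs_mul_secDiff_le hκ Φ x)))
    _ = c * ∫ w, |singularKernel d w * secDiff Φ x w| := integral_const_mul _ _
    _ ≤ c * C := mul_le_mul_of_nonneg_left hx.2 hc

lemma SecDiffMassLE.abs_poissonIntegral_sub_le {C : ℝ} {x : Ed d} (hΦ : PoissonIntegrable Φ)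
    (hx : SecDiffMassLE Φ C x) {t : ℝ} (ht : 0 < t) :
    |poissonIntegral Φ (x, t) - Φ x| ≤ poissonConst d * t * C / 2 := by
  rw [hΦ.poissonIntegral_eq_secDiff ht, add_sub_cancel_right, abs_div, abs_two]
  gcongr
  exact hx.abs_integral_mul_secDiff_le (mul_nonneg (poissonConst_pos d).le ht.le)
    fun w => abs_poissonK_le_singularKernel ht.le

lemma SecDiffMassLE.abs_poissonDerivIntegral_le {C : ℝ} {x : Ed d} (hΦ : PoissonIntegrable Φ)
    (hx : SecDiffMassLE Φ C x) {t : ℝ} (ht : 0 < t) :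
    |poissonDerivIntegral Φ (x, t)| ≤ poissonConst d * (d + 1) * C / 2 := by
  rw [hΦ.poissonDerivIntegral_eq_secDiff ht, abs_div, abs_two]
  gcongr
  exact hx.abs_integral_mul_secDiff_le (mul_nonneg (poissonConst_pos d).le (by positivity))
    fun w => abs_poissonKDeriv_le_singularKernel ht

end PoissonIntegral

section HalfLaplacian

variable {d : ℕ} {Φ : Ed d → ℝ} {x : Ed d}

lemma tendsto_integral_mul_secDiff {l : Filter ℝ} [l.IsCountablyGenerated] {κ : ℝ → Ed d → ℝ}
    {a c : ℝ} (hΦ : PoissonIntegrable Φ)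
    (hx : Integrable fun w => singularKernel d w * secDiff Φ x w)
    (hmeas : ∀ᶠ t in l, AEStronglyMeasurable (κ t))
    (hbound : ∀ᶠ t in l, ∀ w ≠ 0, |κ t w| ≤ c * singularKernel d w)
    (hlim : ∀ w ≠ 0, Tendsto (fun t => κ t w) l (𝓝 (a * singularKernel d w))) :
    Tendsto (fun t => ∫ w, κ t w * secDiff Φ x w) l
      (𝓝 (a * ∫ w, singularKernel d w * secDiff Φ x w)) := by
  rw [← integral_const_mul]
  refine tendsto_integral_filter_of_dominated_convergence _
    (hmeas.mono fun t ht => ht.mul (hΦ.aestronglyMeasurable_secDiff x))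
    (hbound.mono fun t ht => Eventually.of_forall (abs_mul_secDiff_le ht Φ x))
    (hx.abs.const_mul c) (Eventually.of_forall fun w => ?_)
  rcases eq_or_ne w 0 with rfl | hw
  · simp [secDiff_zero, tendsto_const_nhds]
  · simpa only [mul_assoc] using (hlim w hw).mul_const (secDiff Φ x w)

lemma fracConst_one_pos (d : ℕ) : 0 < fracConst d 1 := by
  have : 0 < Real.Gamma (((d : ℝ) + 1) / 2) := Real.Gamma_pos_of_pos (by positivity)
  have : 0 < Real.Gamma (1 - 1 / 2) := Real.Gamma_pos_of_pos (by norm_num)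
  unfold fracConst
  positivity

lemma setIntegral_truncated_eq_secDiff (hΦ : PoissonIntegrable Φ) (x : Ed d) {ε : ℝ}
    (hε : 0 < ε) :
    ∫ y in {y : Ed d | ε < ‖y - x‖}, (Φ y - Φ x) * ‖y - x‖ ^ (-(d : ℝ) - 1) =
      (∫ w, truncKernel d ε w * secDiff Φ x w) / 2 := by
  obtain ⟨C, hC⟩ := exists_abs_truncKernel_le_decayWeight (d := d) hε
  have hmeas := (measurable_truncKernel (d := d) ε).aestronglyMeasurable (μ := volume)
  have hκ : Integrable (truncKernel d ε) := integrable_of_abs_le_decayWeight hmeas hC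
  have hκΦ := hΦ.integrable_kernel_mul hmeas hC x
  rw [← integral_indicator (measurableSet_lt measurable_const (by fun_prop))]
  calc ∫ y, {y : Ed d | ε < ‖y - x‖}.indicator
          (fun y => (Φ y - Φ x) * ‖y - x‖ ^ (-(d : ℝ) - 1)) y
      = ∫ y, (truncKernel d ε (x - y) * Φ y - Φ x * truncKernel d ε (x - y)) := by
        congr 1 with y
        simp only [truncKernel, singularKernel, indicator, mem_ofPred_eq, norm_sub_rev x y,
          neg_add']
        split_ifs <;> ring
    _ = (∫ w, truncKernel d ε w * secDiff Φ x w) / 2 := by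
        rw [integral_sub hκΦ ((hκ.comp_sub_left x).const_mul _), integral_const_mul,
          integral_sub_left_eq_self (truncKernel d ε) volume x,
          integral_even_mul_eq_secDiff (truncKernel_neg ε) hκ hκΦ]
        ring

lemma tendsto_integral_truncKernel_mul_secDiff (hΦ : PoissonIntegrable Φ)
    (hx : Integrable fun w => singularKernel d w * secDiff Φ x w) :
    Tendsto (fun ε => ∫ w, truncKernel d ε w * secDiff Φ x w) (𝓝[>] 0)
      (𝓝 (∫ w, singularKernel d w * secDiff Φ x w)) := by
  rw [← one_mul (∫ w, _)]
  refine tendsto_integral_mul_secDiff (c := 1) hΦ hx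
    (Eventually.of_forall fun ε => (measurable_truncKernel ε).aestronglyMeasurable)
    (Eventually.of_forall fun ε w _ => ?_) fun w hw => ?_
  · rw [one_mul]
    exact abs_truncKernel_le_singularKernel ε w
  · have hε : ∀ᶠ ε : ℝ in 𝓝[>] 0, ε < ‖w‖ :=
      nhdsWithin_le_nhds (gt_mem_nhds (norm_pos_iff.2 hw))
    refine tendsto_const_nhds.congr' (hε.mono fun ε hε => ?_)
    simp [truncKernel, hε]

lemma integral_singularKernel_mul_secDiff_eq_zero (hΦ : PoissonIntegrable Φ)
    (hx : Integrable fun w => singularKernel d w * secDiff Φ x w) (hfrac : fracLapAt d 1 Φ x 0) :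
    ∫ w, singularKernel d w * secDiff Φ x w = 0 := by
  have hzero : Tendsto (fun ε => fracConst d 1 * ((∫ w, truncKernel d ε w * secDiff Φ x w) / 2))
      (𝓝[>] 0) (𝓝 0) := by
    refine hfrac.congr' ?_
    filter_upwards [self_mem_nhdsWithin] with ε hε
    rw [setIntegral_truncated_eq_secDiff hΦ x hε]
  have hlim := tendsto_nhds_unique hzero
    (((tendsto_integral_truncKernel_mul_secDiff hΦ hx).div_const 2).const_mul (fracConst d 1))
  simpa [(fracConst_one_pos d).ne'] using hlim.symm

lemma poissonKDeriv_zero {w : Ed d} (hw : w ≠ 0) :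
    poissonKDeriv d 0 w = poissonConst d * singularKernel d w := by
  have hw' : 0 < ‖w‖ := norm_pos_iff.2 hw
  rw [poissonKDeriv, singularKernel, zero_pow two_ne_zero, mul_zero, sub_zero, add_zero, mul_assoc,
    ← rpow_eq_mul_rpow_sub_one (by positivity), ← rpow_natCast, ← rpow_mul hw'.le]
  congr 2
  push_cast
  ring

lemma tendsto_poissonDerivIntegral (hΦ : PoissonIntegrable Φ)
    (hx : Integrable fun w => singularKernel d w * secDiff Φ x w) (hfrac : fracLapAt d 1 Φ x 0) :
    Tendsto (fun t => poissonDerivIntegral Φ (x, t)) (𝓝[>] 0) (𝓝 0) := by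
  have hlim : Tendsto (fun t => ∫ w, poissonKDeriv d t w * secDiff Φ x w) (𝓝[>] 0)
      (𝓝 (poissonConst d * ∫ w, singularKernel d w * secDiff Φ x w)) := by
    refine tendsto_integral_mul_secDiff hΦ hx
      (eventually_mem_nhdsWithin.mono fun t ht =>
        (continuous_poissonKDeriv ht).aestronglyMeasurable)
      (eventually_mem_nhdsWithin.mono fun t ht w => abs_poissonKDeriv_le_singularKernel ht)
      fun w hw => ?_
    have hcont : ContinuousAt (fun t => poissonKDeriv d t w) 0 :=
      (continuousAt_uncurry_poissonKDeriv (p := (w, 0)) (by simp [hw])).comp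
        (f := fun t => (w, t)) (by fun_prop)
    rw [← poissonKDeriv_zero hw]
    exact hcont.tendsto.mono_left nhdsWithin_le_nhds
  rw [integral_singularKernel_mul_secDiff_eq_zero hΦ hx hfrac, mul_zero] at hlim
  have hhalf := hlim.div_const 2
  rw [zero_div] at hhalf
  refine hhalf.congr' ?_
  filter_upwards [self_mem_nhdsWithin] with t ht
  rw [hΦ.poissonDerivIntegral_eq_secDiff ht]

end HalfLaplacian

section Continuity

variable {d : ℕ} {Φ : Ed d → ℝ}

lemma PoissonIntegrable.continuousAt_poissonIntegral (hΦ : PoissonIntegrable Φ) {t : ℝ}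
    (ht : 0 < t) (x : Ed d) : ContinuousAt (poissonIntegral Φ) (x, t) := by
  obtain ⟨C, hC, h⟩ := exists_abs_poissonK_le_decayWeight (d := d) (half_pos ht) (2 * t)
  have hnear₁ : ∀ᶠ p : Ed d × ℝ in 𝓝 (x, t), ‖p.1‖ < ‖x‖ + 1 :=
    ContinuousAt.eventually_lt (by fun_prop) continuousAt_const (by simp)
  have hnear₂ : ∀ᶠ p : Ed d × ℝ in 𝓝 (x, t), p.2 ∈ Icc (t / 2) (2 * t) :=
    continuousAt_snd.eventually (Icc_mem_nhds (by simpa using half_lt_self ht)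
      (by simpa using by linarith))
  refine continuousAt_of_dominated
    (bound := fun y => C * (1 + (‖x‖ + 1)) ^ ((d : ℝ) + 1) * |decayWeight d y * Φ y|) ?_ ?_
    (hΦ.abs.const_mul _) (Eventually.of_forall fun y => ?_)
  · filter_upwards [hnear₂] with p hp
    exact (hΦ.integrable_poissonK_mul ((half_pos ht).trans_le hp.1) p.1).aestronglyMeasurable
  · filter_upwards [hnear₁, hnear₂] with p hp₁ hp₂
    refine Eventually.of_forall fun y => ?_
    exact (abs_kernel_mul_le (h p.2 hp₂) Φ p.1 y).trans (by gcongr)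
  · exact ((continuousAt_uncurry_poissonK ht (x - y)).comp (x := (x, t))
      (f := fun p : Ed d × ℝ => (p.1 - y, p.2)) (by fun_prop)).mul continuousAt_const

lemma poissonExtension_of_ne_zero {p : Ed d × ℝ} (hp : p.2 ≠ 0) :
    poissonExtension Φ p = poissonIntegral Φ (p.1, |p.2|) := if_neg hp

lemma PoissonIntegrable.continuousAt_poissonExtension_of_ne_zero (hΦ : PoissonIntegrable Φ)
    {p : Ed d × ℝ} (hp : p.2 ≠ 0) : ContinuousAt (poissonExtension Φ) p := by
  have hcont : ContinuousAt (fun q : Ed d × ℝ => poissonIntegral Φ (q.1, |q.2|)) p :=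
    (hΦ.continuousAt_poissonIntegral (abs_pos.2 hp) p.1).comp
      (f := fun q : Ed d × ℝ => (q.1, |q.2|)) (by fun_prop)
  exact hcont.congr ((continuousAt_snd.eventually_ne hp).mono fun q hq =>
    (poissonExtension_of_ne_zero hq).symm)

lemma PoissonIntegrable.continuousAt_poissonExtension_boundary (hΦ : PoissonIntegrable Φ)
    {x : Ed d} {C : ℝ} (hcont : ContinuousAt Φ x) (hC : ∀ᶠ x' in 𝓝 x, SecDiffMassLE Φ C x') :
    ContinuousAt (poissonExtension Φ) (x, 0) := by
  have hbound : ∀ᶠ p : Ed d × ℝ in 𝓝 (x, 0),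
      ‖poissonExtension Φ p - Φ p.1‖ ≤ poissonConst d * |p.2| * C / 2 := by
    filter_upwards [continuousAt_fst.eventually hC] with p hp
    rcases eq_or_ne p.2 0 with h0 | h0
    · simp [poissonExtension, h0]
    · rw [poissonExtension_of_ne_zero h0]
      exact hp.abs_poissonIntegral_sub_le hΦ (abs_pos.2 h0)
  have hdiff : Tendsto (fun p => poissonExtension Φ p - Φ p.1) (𝓝 (x, 0)) (𝓝 0) := by
    refine squeeze_zero_norm' hbound ?_
    have : ContinuousAt (fun p : Ed d × ℝ => poissonConst d * |p.2| * C / 2) (x, 0) := by fun_prop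
    simpa [ContinuousAt] using this
  have hfst : Tendsto (fun p : Ed d × ℝ => Φ p.1) (𝓝 (x, 0)) (𝓝 (Φ x)) :=
    hcont.tendsto.comp continuousAt_fst
  have hsum := hdiff.add hfst
  simp only [sub_add_cancel, zero_add] at hsum
  rwa [ContinuousAt, show poissonExtension Φ (x, 0) = Φ x from if_pos rfl]

lemma PoissonIntegrable.continuousOn_poissonExtension (hΦ : PoissonIntegrable Φ)
    {E : Set (Ed d)} (hcont : ∀ x ∈ E, ContinuousAt Φ x)
    (hmass : ∀ x ∈ E, ∃ C, ∀ᶠ x' in 𝓝 x, SecDiffMassLE Φ C x') :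
    ContinuousOn (poissonExtension Φ) {p : Ed d × ℝ | p.2 ≠ 0 ∨ p.1 ∈ E} := by
  rintro ⟨x, t⟩ hp
  refine ContinuousAt.continuousWithinAt ?_
  rcases eq_or_ne t 0 with rfl | ht
  · have hx : x ∈ E := hp.resolve_left (by simp)
    obtain ⟨C, hC⟩ := hmass x hx
    exact hΦ.continuousAt_poissonExtension_boundary (hcont x hx) hC
  · exact hΦ.continuousAt_poissonExtension_of_ne_zero ht

lemma exists_secDiffMassLE_of_isCompact {L : Set (Ed d)} (hL : IsCompact L)
    (hmass : ∀ x ∈ L, ∃ C, ∀ᶠ x' in 𝓝 x, SecDiffMassLE Φ C x') :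
    ∃ C, ∀ x ∈ L, SecDiffMassLE Φ C x := by
  refine hL.induction_on (p := fun s => ∃ C, ∀ x ∈ s, SecDiffMassLE Φ C x) ⟨0, by simp⟩
    ?_ ?_ fun x hx => ?_
  · rintro s t hst ⟨C, hC⟩
    exact ⟨C, fun x hx => hC x (hst hx)⟩
  · rintro s t ⟨C, hC⟩ ⟨C', hC'⟩
    refine ⟨max C C', fun x hx => hx.elim (fun hx => ?_) fun hx => ?_⟩
    · exact ⟨(hC x hx).1, (hC x hx).2.trans (le_max_left _ _)⟩
    · exact ⟨(hC' x hx).1, (hC' x hx).2.trans (le_max_right _ _)⟩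
  · obtain ⟨C, hC⟩ := hmass x hx
    exact ⟨_, mem_nhdsWithin_of_mem_nhds hC, C, fun y hy => hy⟩

end Continuity

section Green

lemma hasCompactSupport_slice_fst {X Y : Type*} [TopologicalSpace X] [TopologicalSpace Y]
    [R1Space X] {f : X × Y → ℝ} (hf : HasCompactSupport f) (y : Y) :
    HasCompactSupport fun x => f (x, y) :=
  HasCompactSupport.intro (hf.isCompact.image continuous_fst) fun _ hx =>
    image_eq_zero_of_notMem_tsupport fun h => hx ⟨_, h, rfl⟩

lemma hasCompactSupport_slice_snd {X Y : Type*} [TopologicalSpace X] [TopologicalSpace Y]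
    [R1Space Y] {f : X × Y → ℝ} (hf : HasCompactSupport f) (x : X) :
    HasCompactSupport fun y => f (x, y) :=
  HasCompactSupport.intro (hf.isCompact.image continuous_snd) fun _ hy =>
    image_eq_zero_of_notMem_tsupport fun h => hy ⟨_, h, rfl⟩

section HalfLine

variable {h h₁ h₂ f f₁ f₂ : ℝ → ℝ} {δ : ℝ}

lemma integral_Ioi_green (hδ : 0 < δ)
    (hh : ∀ s, 0 < s → HasDerivAt h (h₁ s) s) (hh₁ : ∀ s, 0 < s → HasDerivAt h₁ (h₂ s) s)
    (hf : ∀ t, HasDerivAt f (f₁ t) t) (hf₁ : ∀ t, HasDerivAt f₁ (f₂ t) t)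
    (hc : HasCompactSupport f)
    (hi : Integrable fun t => h (|t| + δ) * f₂ t - h₂ (|t| + δ) * f t) :
    ∫ t in Ioi 0, (h (|t| + δ) * f₂ t - h₂ (|t| + δ) * f t) = h₁ δ * f 0 - h δ * f₁ 0 := by
  have hshift {k k' : ℝ → ℝ} (hk : ∀ s, 0 < s → HasDerivAt k (k' s) s) (t : ℝ) (ht : 0 ≤ t) :
      HasDerivAt (fun t => k (t + δ)) (k' (t + δ)) t :=
    (hk (t + δ) (by linarith)).comp_add_const t δ
  have hderiv (t : ℝ) (ht : 0 ≤ t) :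
      HasDerivAt (fun t => h (t + δ) * f₁ t - h₁ (t + δ) * f t)
        (h (|t| + δ) * f₂ t - h₂ (|t| + δ) * f t) t := by
    refine (((hshift hh t ht).fun_mul (hf₁ t)).fun_sub
      ((hshift hh₁ t ht).fun_mul (hf t))).congr_deriv ?_
    rw [abs_of_nonneg ht]
    ring
  have hlim : Tendsto (fun t => h (t + δ) * f₁ t - h₁ (t + δ) * f t) atTop (𝓝 0) := by
    obtain rfl : f₁ = deriv f := funext fun t => (hf t).deriv.symm
    refine tendsto_const_nhds.congr' ?_
    filter_upwards [atTop_le_cocompact (IsCompact.compl_mem_cocompact hc.isCompact)] with t ht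
    have hzero : deriv f t = 0 := Function.notMem_support.1 fun h => ht (support_deriv_subset h)
    simp [hzero, image_eq_zero_of_notMem_tsupport ht]
  rw [integral_Ioi_of_hasDerivAt_of_tendsto (hderiv 0 le_rfl).continuousAt.continuousWithinAt
    (fun t ht => hderiv t (le_of_lt ht)) hi.integrableOn hlim]
  simp

/-- The two half-lines contribute the jump of the derivative of `h (|t| + δ)` at `t = 0`. -/
lemma integral_abs_green (hδ : 0 < δ)
    (hh : ∀ s, 0 < s → HasDerivAt h (h₁ s) s) (hh₁ : ∀ s, 0 < s → HasDerivAt h₁ (h₂ s) s)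
    (hf : ∀ t, HasDerivAt f (f₁ t) t) (hf₁ : ∀ t, HasDerivAt f₁ (f₂ t) t)
    (hc : HasCompactSupport f)
    (hi : Integrable fun t => h (|t| + δ) * f₂ t - h₂ (|t| + δ) * f t) :
    ∫ t, (h (|t| + δ) * f₂ t - h₂ (|t| + δ) * f t) = 2 * (h₁ δ * f 0) := by
  have hright := integral_Ioi_green hδ hh hh₁ hf hf₁ hc hi
  have hleft := integral_Ioi_green (f := fun t => f (-t)) (f₁ := fun t => -f₁ (-t))
    (f₂ := fun t => f₂ (-t)) hδ hh hh₁
    (fun t => by simpa using! (hf (-t)).scomp t (hasDerivAt_neg t))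
    (fun t => by simpa using! ((hf₁ (-t)).scomp t (hasDerivAt_neg t)).neg)
    (hc.comp_homeomorph (Homeomorph.neg ℝ)) (by simpa using hi.comp_neg)
  have hreflect := integral_comp_neg_Ioi (0 : ℝ)
    fun t => h (|t| + δ) * f₂ t - h₂ (|t| + δ) * f t
  simp only [abs_neg, neg_zero] at hleft hreflect
  rw [← intervalIntegral.integral_Iic_add_Ioi hi.integrableOn hi.integrableOn (b := 0), hright,
    ← hreflect, hleft]
  ring

end HalfLine

variable {V : Type*} [NormedAddCommGroup V] [NormedSpace ℝ V]

lemma hasDerivAt_slice_snd {f : V × ℝ → ℝ} (hf : Differentiable ℝ f) (x : V) (t : ℝ) :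
    HasDerivAt (fun t => f (x, t)) (fderiv ℝ f (x, t) (0, 1)) t :=
  (hf (x, t)).hasFDerivAt.comp_hasDerivAt t ((hasDerivAt_const t x).prodMk (hasDerivAt_id t))

variable [FiniteDimensional ℝ V] [MeasurableSpace V] [BorelSpace V]

lemma integral_mul_fderiv_fderiv {μ : Measure V} [μ.IsAddHaarMeasure] {k k₁ k₂ f : V → ℝ} {v : V}
    (hk : ∀ x, HasLineDerivAt ℝ k (k₁ x) x v) (hk₁ : ∀ x, HasLineDerivAt ℝ k₁ (k₂ x) x v)
    (hkc : Continuous k) (hk₁c : Continuous k₁) (hk₂c : Continuous k₂)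
    (hf : ContDiff ℝ 2 f) (hc : HasCompactSupport f) :
    ∫ x, k x * fderiv ℝ (fun y => fderiv ℝ f y v) x v ∂μ = ∫ x, k₂ x * f x ∂μ := by
  have hf₁ := contDiff_fderiv_apply hf v
  have hc₁ : HasCompactSupport fun x => fderiv ℝ f x v := hc.fderiv_apply ℝ v
  have hint {a b : V → ℝ} (ha : Continuous a) (hb : Continuous b) (hbc : HasCompactSupport b) :
      Integrable (fun x => ContinuousLinearMap.mul ℝ ℝ (a x) (b x)) μ :=
    (ha.mul hb).integrable_of_hasCompactSupport hbc.mul_left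
  have hparts := integral_bilinear_hasLineDerivAt_right_eq_neg_left_of_integrable
    (hint hk₁c hf₁.continuous hc₁)
    (hint hkc (continuous_fderiv_fderiv_apply hf v) (hc₁.fderiv_apply ℝ v))
    (hint hkc hf₁.continuous hc₁) (fun x _ => hk x)
    fun x _ => (hf₁.differentiable one_ne_zero x).hasFDerivAt.hasLineDerivAt v
  have hparts₁ := integral_bilinear_hasLineDerivAt_right_eq_neg_left_of_integrable
    (hint hk₂c hf.continuous hc) (hint hk₁c hf₁.continuous hc₁) (hint hk₁c hf.continuous hc)
    (fun x _ => hk₁ x) fun x _ => (hf.differentiable two_ne_zero x).hasFDerivAt.hasLineDerivAt v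
  simp only [ContinuousLinearMap.mul_apply'] at hparts hparts₁
  rw [hparts, hparts₁, neg_neg]

lemma integral_prod_abs_green {μ : Measure V} [IsFiniteMeasureOnCompacts μ]
    {h h₁ h₂ : ℝ → V → ℝ} {f : V × ℝ → ℝ} {δ : ℝ} (hδ : 0 < δ)
    (hh : ∀ x s, 0 < s → HasDerivAt (fun s => h s x) (h₁ s x) s)
    (hh₁ : ∀ x s, 0 < s → HasDerivAt (fun s => h₁ s x) (h₂ s x) s)
    (hhc : Continuous fun q : V × ℝ => h (|q.2| + δ) q.1)
    (hh₂c : Continuous fun q : V × ℝ => h₂ (|q.2| + δ) q.1)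
    (hf : ContDiff ℝ 2 f) (hc : HasCompactSupport f) :
    ∫ q, h (|q.2| + δ) q.1 * fderiv ℝ (fun q => fderiv ℝ f q (0, 1)) q (0, 1) ∂(μ.prod volume) =
      ∫ q, h₂ (|q.2| + δ) q.1 * f q ∂(μ.prod volume) + 2 * ∫ x, h₁ δ x * f (x, 0) ∂μ := by
  have hf₁ := contDiff_fderiv_apply hf (0, 1)
  have hint : Integrable (fun q => h (|q.2| + δ) q.1 *
      fderiv ℝ (fun q => fderiv ℝ f q (0, 1)) q (0, 1)) (μ.prod volume) :=
    (hhc.mul (continuous_fderiv_fderiv_apply hf _)).integrable_of_hasCompactSupport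
      (HasCompactSupport.fderiv_apply ℝ (hc.fderiv_apply ℝ (0, 1)) (0, 1)).mul_left
  have hint₂ : Integrable (fun q => h₂ (|q.2| + δ) q.1 * f q) (μ.prod volume) :=
    (hh₂c.mul hf.continuous).integrable_of_hasCompactSupport hc.mul_left
  rw [← sub_eq_iff_eq_add', ← integral_sub hint hint₂, ← integral_const_mul]
  refine (integral_prod _ (hint.sub hint₂)).trans (integral_congr_ae ?_)
  filter_upwards [(hint.sub hint₂).prod_right_ae] with x hx
  exact integral_abs_green hδ (hh x) (hh₁ x)
    (fun t => hasDerivAt_slice_snd (hf.differentiable two_ne_zero) x t)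
    (fun t => hasDerivAt_slice_snd (hf₁.differentiable one_ne_zero) x t)
    (hasCompactSupport_slice_snd hc x) hx

end Green

section KernelDerivatives

variable {d : ℕ}

/-- The second derivative in `t` of the Poisson kernel `P_t(x)`. -/
noncomputable def poissonKDeriv₂ (d : ℕ) (t : ℝ) (x : Ed d) : ℝ :=
  poissonConst d * (-(2 * d * t)) * (‖x‖ ^ 2 + t ^ 2) ^ (-((d : ℝ) + 1) / 2 - 1) +
    poissonConst d * (‖x‖ ^ 2 - d * t ^ 2) *
      (2 * t * (-((d : ℝ) + 1) / 2 - 1) * (‖x‖ ^ 2 + t ^ 2) ^ (-((d : ℝ) + 1) / 2 - 1 - 1))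

/-- The derivative of the Poisson kernel `P_t(x)` in the direction `e ∈ ℝ^d`. -/
noncomputable def poissonKLineDeriv (e : Ed d) (t : ℝ) (x : Ed d) : ℝ :=
  poissonConst d * t *
    (2 * ⟪x, e⟫ * (-((d : ℝ) + 1) / 2) * (‖x‖ ^ 2 + t ^ 2) ^ (-((d : ℝ) + 1) / 2 - 1))

/-- The second derivative of the Poisson kernel `P_t(x)` in the direction `e ∈ ℝ^d`. -/
noncomputable def poissonKLineDeriv₂ (e : Ed d) (t : ℝ) (x : Ed d) : ℝ :=
  poissonConst d * t *
    (2 * ‖e‖ ^ 2 * (-((d : ℝ) + 1) / 2) * (‖x‖ ^ 2 + t ^ 2) ^ (-((d : ℝ) + 1) / 2 - 1) +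
      2 * ⟪x, e⟫ * (-((d : ℝ) + 1) / 2) * (2 * ⟪x, e⟫ * (-((d : ℝ) + 1) / 2 - 1) *
        (‖x‖ ^ 2 + t ^ 2) ^ (-((d : ℝ) + 1) / 2 - 1 - 1)))

lemma hasDerivAt_poissonKDeriv {t : ℝ} (ht : 0 < t) (x : Ed d) :
    HasDerivAt (fun t => poissonKDeriv d t x) (poissonKDeriv₂ d t x) t := by
  have hpoly : HasDerivAt (fun t : ℝ => poissonConst d * (‖x‖ ^ 2 - d * t ^ 2))
      (poissonConst d * (-(2 * d * t))) t := by
    refine ((((hasDerivAt_pow 2 t).const_mul (d : ℝ)).const_sub (‖x‖ ^ 2)).const_mul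
      (poissonConst d)).congr_deriv ?_
    push_cast
    ring
  exact hpoly.fun_mul (hasDerivAt_norm_sq_add_sq_rpow ht x (-((d : ℝ) + 1) / 2 - 1))

lemma hasLineDerivAt_norm_sq_add_sq_rpow {V : Type*} [NormedAddCommGroup V]
    [InnerProductSpace ℝ V] {t : ℝ} (ht : 0 < t) (x e : V) (p : ℝ) :
    HasLineDerivAt ℝ (fun x : V => (‖x‖ ^ 2 + t ^ 2) ^ p)
      (2 * ⟪x, e⟫ * p * (‖x‖ ^ 2 + t ^ 2) ^ (p - 1)) x e := by
  have hsq : HasDerivAt (fun r : ℝ => ‖x + r • e‖ ^ 2) (2 * ⟪x, e⟫) 0 := by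
    simpa [HasLineDerivAt] using (hasStrictFDerivAt_norm_sq x).hasFDerivAt.hasLineDerivAt e
  simpa [HasLineDerivAt] using
    (hsq.add_const (t ^ 2)).rpow_const (p := p) (Or.inl (by positivity))

lemma hasLineDerivAt_poissonK {t : ℝ} (ht : 0 < t) (x e : Ed d) :
    HasLineDerivAt ℝ (poissonK d t) (poissonKLineDeriv e t x) x e :=
  HasDerivAt.const_mul (poissonConst d * t)
    (hasLineDerivAt_norm_sq_add_sq_rpow ht x e (-((d : ℝ) + 1) / 2))

lemma hasLineDerivAt_poissonKLineDeriv {t : ℝ} (ht : 0 < t) (x e : Ed d) :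
    HasLineDerivAt ℝ (poissonKLineDeriv e t) (poissonKLineDeriv₂ e t x) x e := by
  have hinner : HasDerivAt (fun r : ℝ => 2 * ⟪x + r • e, e⟫ * (-((d : ℝ) + 1) / 2))
      (2 * ‖e‖ ^ 2 * (-((d : ℝ) + 1) / 2)) 0 := by
    simpa [inner_add_left, real_inner_smul_left] using
      ((((hasDerivAt_id (0 : ℝ)).mul_const (‖e‖ ^ 2)).const_add ⟪x, e⟫).const_mul 2).mul_const
        (-((d : ℝ) + 1) / 2)
  simpa [HasLineDerivAt, poissonKLineDeriv, poissonKLineDeriv₂] using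
    (hinner.fun_mul (hasLineDerivAt_norm_sq_add_sq_rpow ht x e
      (-((d : ℝ) + 1) / 2 - 1))).const_mul (poissonConst d * t)

lemma sum_poissonKLineDeriv₂_add_poissonKDeriv₂ {t : ℝ} (ht : 0 < t) (x : Ed d) :
    (∑ i, poissonKLineDeriv₂ (EuclideanSpace.single i 1) t x) + poissonKDeriv₂ d t x = 0 := by
  have hterm (i : Fin d) : poissonKLineDeriv₂ (EuclideanSpace.single i 1) t x =
      poissonConst d * t * (2 * (-((d : ℝ) + 1) / 2) *
        (‖x‖ ^ 2 + t ^ 2) ^ (-((d : ℝ) + 1) / 2 - 1)) +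
      poissonConst d * t * (4 * (-((d : ℝ) + 1) / 2) * (-((d : ℝ) + 1) / 2 - 1) *
        (‖x‖ ^ 2 + t ^ 2) ^ (-((d : ℝ) + 1) / 2 - 1 - 1)) * (x i) ^ 2 := by
    simp only [poissonKLineDeriv₂, EuclideanSpace.inner_single_right, PiLp.norm_single, norm_one,
      conj_trivial, one_mul, one_pow]
    ring
  simp only [hterm]
  rw [Finset.sum_add_distrib, Finset.sum_const, Finset.card_univ, Fintype.card_fin, nsmul_eq_mul,
    ← Finset.mul_sum, ← EuclideanSpace.real_norm_sq_eq, poissonKDeriv₂,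
    rpow_eq_mul_rpow_sub_one (s := ‖x‖ ^ 2 + t ^ 2) (by positivity) (-((d : ℝ) + 1) / 2 - 1)]
  ring

lemma continuous_rpow_abs_add {V : Type*} [SeminormedAddCommGroup V] {δ : ℝ} (hδ : 0 < δ) (z : V)
    (p : ℝ) : Continuous fun q : V × ℝ => (‖q.1 - z‖ ^ 2 + (|q.2| + δ) ^ 2) ^ p :=
  Continuous.rpow_const (by fun_prop) fun q => Or.inl (by positivity)

lemma hasLineDerivAt_comp_abs_add_sub {V : Type*} [AddCommGroup V] [Module ℝ V]
    {K K' : ℝ → V → ℝ} {e : V} (hK : ∀ t, 0 < t → ∀ x, HasLineDerivAt ℝ (K t) (K' t x) x e)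
    {δ : ℝ} (hδ : 0 < δ) (z : V) (q : V × ℝ) :
    HasLineDerivAt ℝ (fun q : V × ℝ => K (|q.2| + δ) (q.1 - z)) (K' (|q.2| + δ) (q.1 - z)) q
      (e, 0) := by
  simpa [HasLineDerivAt, add_sub_right_comm] using hK (|q.2| + δ) (by positivity) (q.1 - z)

lemma continuous_poissonK_abs_add {δ : ℝ} (hδ : 0 < δ) (z : Ed d) :
    Continuous fun q : Ed d × ℝ => poissonK d (|q.2| + δ) (q.1 - z) := by
  have := continuous_rpow_abs_add hδ z
  unfold poissonK
  fun_prop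

lemma continuous_poissonKDeriv₂_abs_add {δ : ℝ} (hδ : 0 < δ) (z : Ed d) :
    Continuous fun q : Ed d × ℝ => poissonKDeriv₂ d (|q.2| + δ) (q.1 - z) := by
  have := continuous_rpow_abs_add hδ z
  unfold poissonKDeriv₂
  fun_prop

lemma continuous_poissonKLineDeriv_abs_add {δ : ℝ} (hδ : 0 < δ) (z e : Ed d) :
    Continuous fun q : Ed d × ℝ => poissonKLineDeriv e (|q.2| + δ) (q.1 - z) := by
  have := continuous_rpow_abs_add hδ z
  unfold poissonKLineDeriv
  fun_prop

lemma continuous_poissonKLineDeriv₂_abs_add {δ : ℝ} (hδ : 0 < δ) (z e : Ed d) :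
    Continuous fun q : Ed d × ℝ => poissonKLineDeriv₂ e (|q.2| + δ) (q.1 - z) := by
  have := continuous_rpow_abs_add hδ z
  unfold poissonKLineDeriv₂
  fun_prop

lemma integral_poissonK_mul_fderiv_fderiv_fst {ζ : Ed d × ℝ → ℝ} (hζ : ContDiff ℝ 2 ζ)
    (hc : HasCompactSupport ζ) {δ : ℝ} (hδ : 0 < δ) (z e : Ed d) :
    ∫ q : Ed d × ℝ, poissonK d (|q.2| + δ) (q.1 - z) *
        fderiv ℝ (fun q => fderiv ℝ ζ q (e, 0)) q (e, 0) =
      ∫ q : Ed d × ℝ, poissonKLineDeriv₂ e (|q.2| + δ) (q.1 - z) * ζ q :=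
  integral_mul_fderiv_fderiv (μ := (volume : Measure (Ed d)).prod volume)
    (hasLineDerivAt_comp_abs_add_sub (fun _ ht x => hasLineDerivAt_poissonK ht x e) hδ z)
    (hasLineDerivAt_comp_abs_add_sub (fun _ ht x => hasLineDerivAt_poissonKLineDeriv ht x e) hδ z)
    (continuous_poissonK_abs_add hδ z) (continuous_poissonKLineDeriv_abs_add hδ z e)
    (continuous_poissonKLineDeriv₂_abs_add hδ z e) hζ hc

lemma integral_poissonK_mul_fderiv_fderiv_snd {ζ : Ed d × ℝ → ℝ} (hζ : ContDiff ℝ 2 ζ)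
    (hc : HasCompactSupport ζ) {δ : ℝ} (hδ : 0 < δ) (z : Ed d) :
    ∫ q : Ed d × ℝ, poissonK d (|q.2| + δ) (q.1 - z) *
        fderiv ℝ (fun q => fderiv ℝ ζ q (0, 1)) q (0, 1) =
      (∫ q : Ed d × ℝ, poissonKDeriv₂ d (|q.2| + δ) (q.1 - z) * ζ q) +
        2 * ∫ x, poissonKDeriv d δ (x - z) * ζ (x, 0) :=
  integral_prod_abs_green (h := fun t x => poissonK d t (x - z))
    (h₁ := fun t x => poissonKDeriv d t (x - z)) hδ
    (fun x _ hs => hasDerivAt_poissonK hs (x - z))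
    (fun x _ hs => hasDerivAt_poissonKDeriv hs (x - z))
    (continuous_poissonK_abs_add hδ z) (continuous_poissonKDeriv₂_abs_add hδ z) hζ hc

lemma integral_poissonK_mul_lapProd {ζ : Ed d × ℝ → ℝ} (hζ : ContDiff ℝ 2 ζ)
    (hc : HasCompactSupport ζ) {δ : ℝ} (hδ : 0 < δ) (z : Ed d) :
    ∫ q : Ed d × ℝ, poissonK d (|q.2| + δ) (q.1 - z) * lapProd d ζ q =
      2 * ∫ x, poissonKDeriv d δ (x - z) * ζ (x, 0) := by
  have hint {k f : Ed d × ℝ → ℝ} (hk : Continuous k) (hf : Continuous f)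
      (hfc : HasCompactSupport f) : Integrable fun q => k q * f q :=
    (hk.mul hf).integrable_of_hasCompactSupport hfc.mul_left
  have hintK (v : Ed d × ℝ) : Integrable fun q : Ed d × ℝ =>
      poissonK d (|q.2| + δ) (q.1 - z) * fderiv ℝ (fun q => fderiv ℝ ζ q v) q v :=
    hint (continuous_poissonK_abs_add hδ z) (continuous_fderiv_fderiv_apply hζ v)
      (HasCompactSupport.fderiv_apply ℝ (hc.fderiv_apply ℝ v) v)
  have hharm : (∑ i, ∫ q : Ed d × ℝ,
        poissonKLineDeriv₂ (EuclideanSpace.single i 1) (|q.2| + δ) (q.1 - z) * ζ q) +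
      ∫ q : Ed d × ℝ, poissonKDeriv₂ d (|q.2| + δ) (q.1 - z) * ζ q = 0 := by
    have hintL (i : Fin d) := hint (continuous_poissonKLineDeriv₂_abs_add hδ z
      (EuclideanSpace.single i 1)) hζ.continuous hc
    rw [← integral_finsetSum _ fun i _ => hintL i, ← integral_add
      (integrable_finsetSum _ fun i _ => hintL i)
      (hint (continuous_poissonKDeriv₂_abs_add hδ z) hζ.continuous hc)]
    refine integral_eq_zero_of_ae (Eventually.of_forall fun q => ?_)
    simp only [← Finset.sum_mul, ← add_mul]
    rw [sum_poissonKLineDeriv₂_add_poissonKDeriv₂ (by positivity), zero_mul, Pi.zero_apply]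
  simp only [lapProd_eq_sum_fderiv hζ, mul_add, Finset.mul_sum]
  rw [integral_add (integrable_finsetSum _ fun i _ => hintK _) (hintK _),
    integral_finsetSum _ fun i _ => hintK _, integral_poissonK_mul_fderiv_fderiv_snd hζ hc hδ]
  simp only [integral_poissonK_mul_fderiv_fderiv_fst hζ hc hδ]
  rw [← add_assoc, hharm, zero_add]

end KernelDerivatives

section Fubini

variable {X Z : Type*} [MeasurableSpace X] [MeasurableSpace Z] {μ : Measure X} {ν : Measure Z}
  {k : X → Z → ℝ} {w Φ : Z → ℝ} {g : X → ℝ} {C : ℝ}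

lemma integrable_uncurry_kernel_mul_mul
    (hk : AEStronglyMeasurable (Function.uncurry k) (μ.prod ν)) (hΦ : AEStronglyMeasurable Φ ν)
    (hw : Integrable (fun z => w z * Φ z) ν) (hg : Integrable g μ)
    (hb : ∀ x, g x ≠ 0 → ∀ z, |k x z| ≤ C * w z) :
    Integrable (Function.uncurry fun x z => k x z * Φ z * g x) (μ.prod ν) := by
  refine (hg.norm.mul_prod (hw.norm.const_mul |C|)).mono'
    ((hk.mul hΦ.comp_snd).mul hg.aestronglyMeasurable.comp_fst)
    (Eventually.of_forall fun p => ?_)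
  simp only [Function.uncurry, norm_mul, norm_eq_abs]
  rcases eq_or_ne (g p.1) 0 with h0 | h0
  · simp [h0]
  · calc |k p.1 p.2| * |Φ p.2| * |g p.1| ≤ |C * w p.2| * |Φ p.2| * |g p.1| := by
          gcongr ?_ * _ * _
          exact (hb _ h0 _).trans (le_abs_self _)
      _ = |g p.1| * (|C| * (|w p.2| * |Φ p.2|)) := by
          rw [abs_mul]
          ring

variable [SFinite ν]

lemma integrable_integral_kernel_mul_mul
    (hk : AEStronglyMeasurable (Function.uncurry k) (μ.prod ν)) (hΦ : AEStronglyMeasurable Φ ν)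
    (hw : Integrable (fun z => w z * Φ z) ν) (hg : Integrable g μ)
    (hb : ∀ x, g x ≠ 0 → ∀ z, |k x z| ≤ C * w z) :
    Integrable (fun x => (∫ z, k x z * Φ z ∂ν) * g x) μ := by
  simpa only [Function.uncurry, integral_mul_const] using
    (integrable_uncurry_kernel_mul_mul hk hΦ hw hg hb).integral_prod_left

lemma integral_integral_kernel_mul_mul [SFinite μ]
    (hk : AEStronglyMeasurable (Function.uncurry k) (μ.prod ν)) (hΦ : AEStronglyMeasurable Φ ν)
    (hw : Integrable (fun z => w z * Φ z) ν) (hg : Integrable g μ)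
    (hb : ∀ x, g x ≠ 0 → ∀ z, |k x z| ≤ C * w z) :
    ∫ x, (∫ z, k x z * Φ z ∂ν) * g x ∂μ = ∫ z, (∫ x, k x z * g x ∂μ) * Φ z ∂ν := by
  simp only [← integral_mul_const]
  rw [integral_integral_swap (integrable_uncurry_kernel_mul_mul hk hΦ hw hg hb)]
  simp only [mul_right_comm]

end Fubini

section BoundaryTerm

variable {d : ℕ} {Φ : Ed d → ℝ}

lemma exists_abs_shift_le_decayWeight {K : ℝ → Ed d → ℝ} {s : Set ℝ}
    (hK : ∃ C, 0 ≤ C ∧ ∀ t ∈ s, ∀ x, |K t x| ≤ C * decayWeight d x) (R : ℝ) :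
    ∃ C, ∀ t ∈ s, ∀ x, ‖x‖ ≤ R → ∀ z, |K t (x - z)| ≤ C * decayWeight d z := by
  obtain ⟨C, hC, h⟩ := hK
  refine ⟨C * (1 + R) ^ ((d : ℝ) + 1), fun t ht x hx z => ?_⟩
  refine (abs_kernel_sub_le (h t ht) x z).trans ?_
  have := (decayWeight_pos z).le
  gcongr

lemma continuous_lapProd {ζ : Ed d × ℝ → ℝ} (hζ : ContDiff ℝ 2 ζ) : Continuous (lapProd d ζ) := by
  have := hζ.continuous_iteratedFDeriv (m := 2) le_rfl
  unfold lapProd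
  fun_prop

lemma exists_abs_poissonKDeriv_sub_le {g : Ed d → ℝ} (hg : HasCompactSupport g) {δ : ℝ}
    (hδ : 0 < δ) :
    ∃ C, ∀ x, g x ≠ 0 → ∀ z, |poissonKDeriv d δ (x - z)| ≤ C * decayWeight d z := by
  obtain ⟨R, hR⟩ := hg.isCompact.isBounded.exists_norm_le
  obtain ⟨C, hC⟩ := exists_abs_shift_le_decayWeight
    (exists_abs_poissonKDeriv_le_decayWeight (d := d) hδ δ) R
  exact ⟨C, fun x hx => hC δ ⟨le_rfl, le_rfl⟩ x (hR x (subset_tsupport g hx))⟩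

lemma exists_abs_poissonK_abs_add_sub_le {g : Ed d × ℝ → ℝ} (hg : HasCompactSupport g) {δ : ℝ}
    (hδ : 0 < δ) :
    ∃ C, ∀ q, g q ≠ 0 → ∀ z, |poissonK d (|q.2| + δ) (q.1 - z)| ≤ C * decayWeight d z := by
  obtain ⟨R, hR⟩ := hg.isCompact.isBounded.exists_norm_le
  obtain ⟨C, hC⟩ := exists_abs_shift_le_decayWeight
    (exists_abs_poissonK_le_decayWeight (d := d) hδ (R + δ)) R
  refine ⟨C, fun q hq => hC _ ⟨le_add_of_nonneg_left (abs_nonneg _), ?_⟩ _ ?_⟩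
  · gcongr
    exact (norm_snd_le q).trans (hR q (subset_tsupport g hq))
  · exact (norm_fst_le q).trans (hR q (subset_tsupport g hq))

lemma measurable_poissonK_abs_add_sub (d : ℕ) (δ : ℝ) : Measurable (Function.uncurry
    fun (q : Ed d × ℝ) (z : Ed d) => poissonK d (|q.2| + δ) (q.1 - z)) := by
  unfold poissonK Function.uncurry
  fun_prop

lemma measurable_poissonKDeriv_sub (d : ℕ) (δ : ℝ) : Measurable (Function.uncurry
    fun x z : Ed d => poissonKDeriv d δ (x - z)) := by
  unfold poissonKDeriv Function.uncurry
  fun_prop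

lemma PoissonIntegrable.integrable_poissonDerivIntegral_mul (hΦ : PoissonIntegrable Φ)
    {g : Ed d → ℝ} (hg : Continuous g) (hc : HasCompactSupport g) {δ : ℝ} (hδ : 0 < δ) :
    Integrable fun x => poissonDerivIntegral Φ (x, δ) * g x :=
  have ⟨_, h⟩ := exists_abs_poissonKDeriv_sub_le hc hδ
  integrable_integral_kernel_mul_mul (measurable_poissonKDeriv_sub d δ).aestronglyMeasurable
    hΦ.aestronglyMeasurable hΦ (hg.integrable_of_hasCompactSupport hc) h

lemma PoissonIntegrable.integral_poissonIntegral_mul_lapProd (hΦ : PoissonIntegrable Φ)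
    {ζ : Ed d × ℝ → ℝ} (hζ : ContDiff ℝ 2 ζ) (hc : HasCompactSupport ζ) {δ : ℝ} (hδ : 0 < δ) :
    ∫ q : Ed d × ℝ, poissonIntegral Φ (q.1, |q.2| + δ) * lapProd d ζ q =
      2 * ∫ x, poissonDerivIntegral Φ (x, δ) * ζ (x, 0) := by
  have hcL : HasCompactSupport (lapProd d ζ) := hc.mono' (support_lapProd_subset ζ)
  have hc₀ := hasCompactSupport_slice_fst hc 0
  obtain ⟨_, hK⟩ := exists_abs_poissonK_abs_add_sub_le hcL hδ
  obtain ⟨_, hK'⟩ := exists_abs_poissonKDeriv_sub_le hc₀ hδ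
  have hζ₀ : Continuous fun x : Ed d => ζ (x, 0) := hζ.continuous.comp (by fun_prop)
  simp only [poissonIntegral, poissonDerivIntegral]
  rw [integral_integral_kernel_mul_mul (measurable_poissonK_abs_add_sub d δ).aestronglyMeasurable
      hΦ.aestronglyMeasurable hΦ ((continuous_lapProd hζ).integrable_of_hasCompactSupport hcL) hK,
    integral_integral_kernel_mul_mul (measurable_poissonKDeriv_sub d δ).aestronglyMeasurable
      hΦ.aestronglyMeasurable hΦ (hζ₀.integrable_of_hasCompactSupport hc₀) hK',
    ← integral_const_mul]
  simp only [integral_poissonK_mul_lapProd hζ hc hδ, mul_assoc]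

lemma PoissonIntegrable.tendsto_integral_poissonDerivIntegral_mul (hΦ : PoissonIntegrable Φ)
    {g : Ed d → ℝ} (hg : Continuous g) (hc : HasCompactSupport g)
    (hmass : ∀ x ∈ tsupport g, ∃ C, ∀ᶠ x' in 𝓝 x, SecDiffMassLE Φ C x')
    (hharm : ∀ x ∈ tsupport g, fracLapAt d 1 Φ x 0) :
    Tendsto (fun δ => ∫ x, poissonDerivIntegral Φ (x, δ) * g x) (𝓝[>] 0) (𝓝 0) := by
  obtain ⟨C, hC⟩ := exists_secDiffMassLE_of_isCompact hc.isCompact hmass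
  rw [show 𝓝 (0 : ℝ) = 𝓝 (∫ _ : Ed d, (0 : ℝ)) by rw [integral_zero]]
  refine tendsto_integral_filter_of_dominated_convergence
    (fun x => poissonConst d * (d + 1) * C / 2 * ‖g x‖) ?_ ?_
    ((hg.integrable_of_hasCompactSupport hc).norm.const_mul _) (Eventually.of_forall fun x => ?_)
  · filter_upwards [self_mem_nhdsWithin] with δ hδ
    exact (hΦ.integrable_poissonDerivIntegral_mul hg hc hδ).aestronglyMeasurable
  · filter_upwards [self_mem_nhdsWithin] with δ hδ
    refine Eventually.of_forall fun x => ?_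
    by_cases hx : x ∈ tsupport g
    · rw [norm_mul]
      gcongr
      exact (hC x hx).abs_poissonDerivIntegral_le hΦ hδ
    · simp [image_eq_zero_of_notMem_tsupport hx]
  · by_cases hx : x ∈ tsupport g
    · simpa using (tendsto_poissonDerivIntegral hΦ (hC x hx).1 (hharm x hx)).mul_const (g x)
    · simp [image_eq_zero_of_notMem_tsupport hx]

end BoundaryTerm

section WeakHarmonicity

lemma tendsto_integral_abs_add_mul {X : Type*} [TopologicalSpace X] [MeasurableSpace X]
    [OpensMeasurableSpace (X × ℝ)] {μ : Measure (X × ℝ)} [IsFiniteMeasureOnCompacts μ]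
    {u g : X × ℝ → ℝ} {D : Set (X × ℝ)} (hu : ContinuousOn u D) (hDo : IsOpen D)
    (heven : ∀ q, u (q.1, |q.2|) = u q) (hg : Continuous g) (hc : HasCompactSupport g)
    (hD : ∀ q ∈ tsupport g, ∀ δ, 0 ≤ δ → (q.1, |q.2| + δ) ∈ D) :
    Tendsto (fun δ => ∫ q, u (q.1, |q.2| + δ) * g q ∂μ) (𝓝[>] 0) (𝓝 (∫ q, u q * g q ∂μ)) := by
  have hcont : ContinuousOn (fun δ => ∫ q, u (q.1, |q.2| + δ) * g q ∂μ) (Ici 0) := by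
    refine continuousOn_integral_of_compact_support hc.isCompact ?_ fun δ q _ hq => by
      simp [image_eq_zero_of_notMem_tsupport hq]
    rintro ⟨δ, q⟩ ⟨hδ, -⟩
    by_cases hq : q ∈ tsupport g
    · have hshift : ContinuousAt (fun p : ℝ × (X × ℝ) => (p.2.1, |p.2.2| + p.1)) (δ, q) := by
        fun_prop
      exact (((hu.continuousAt (hDo.mem_nhds (hD q hq δ hδ))).comp (x := (δ, q))
        (f := fun p : ℝ × (X × ℝ) => (p.2.1, |p.2.2| + p.1)) hshift).mul
        (hg.comp continuous_snd).continuousAt).continuousWithinAt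
    · have hzero : ∀ᶠ p : ℝ × (X × ℝ) in 𝓝 (δ, q), g p.2 = 0 :=
        continuousAt_snd.eventually (notMem_tsupport_iff_eventuallyEq.1 hq)
      refine ContinuousAt.continuousWithinAt ((continuousAt_const (y := (0 : ℝ))).congr
        (hzero.mono fun p hp => ?_))
      simp [Function.uncurry, hp]
  have hlim := (hcont 0 self_mem_Ici).mono Ioi_subset_Ici_self
  simpa only [ContinuousWithinAt, add_zero, heven] using hlim

variable {d : ℕ} {Φ : Ed d → ℝ} {E : Set (Ed d)}

lemma isOpen_setOf_ne_or_mem {X : Type*} [TopologicalSpace X] {s : Set X} (hs : IsOpen s) :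
    IsOpen {p : X × ℝ | p.2 ≠ 0 ∨ p.1 ∈ s} :=
  (isOpen_ne_fun continuous_snd continuous_const).union (hs.preimage continuous_fst)

lemma poissonExtension_abs (Φ : Ed d → ℝ) (q : Ed d × ℝ) :
    poissonExtension Φ (q.1, |q.2|) = poissonExtension Φ q := by
  simp [poissonExtension]

theorem PoissonIntegrable.weaklyHarmonicProdOn_poissonExtension (hΦ : PoissonIntegrable Φ)
    (hE : IsOpen E) (hcont : ∀ x ∈ E, ContinuousAt Φ x)
    (hmass : ∀ x ∈ E, ∃ C, ∀ᶠ x' in 𝓝 x, SecDiffMassLE Φ C x')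
    (hharm : ∀ x ∈ E, fracLapAt d 1 Φ x 0) :
    WeaklyHarmonicProdOn (poissonExtension Φ) {p : Ed d × ℝ | p.2 ≠ 0 ∨ p.1 ∈ E} := by
  intro ζ hζ hc hD
  have hζ₂ : ContDiff ℝ 2 ζ := hζ.of_le (WithTop.coe_le_coe.2 le_top)
  have hslice : ∀ x ∈ tsupport fun x : Ed d => ζ (x, 0), x ∈ E := fun x hx =>
    (hD (tsupport_comp_subset_preimage ζ (f := fun x => (x, 0)) (by fun_prop) hx)).resolve_left
      (by simp)
  have hboundary := (hΦ.tendsto_integral_poissonDerivIntegral_mul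
    (hζ.continuous.comp (by fun_prop)) (hasCompactSupport_slice_fst hc 0)
    (fun x hx => hmass x (hslice x hx)) fun x hx => hharm x (hslice x hx)).const_mul 2
  have hshift : Tendsto (fun δ => ∫ q, poissonExtension Φ (q.1, |q.2| + δ) * lapProd d ζ q)
      (𝓝[>] 0) (𝓝 (∫ q, poissonExtension Φ q * lapProd d ζ q)) := by
    refine tendsto_integral_abs_add_mul (hΦ.continuousOn_poissonExtension hcont hmass)
      (isOpen_setOf_ne_or_mem hE) (poissonExtension_abs Φ) (continuous_lapProd hζ₂)
      (hc.mono' (support_lapProd_subset ζ)) fun q hq δ hδ => ?_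
    have hqζ : q ∈ tsupport ζ :=
      closure_minimal (support_lapProd_subset ζ) (isClosed_tsupport ζ) hq
    exact (hD hqζ).imp (fun h => (add_pos_of_pos_of_nonneg (abs_pos.2 h) hδ).ne') id
  refine tendsto_nhds_unique hshift ?_
  rw [mul_zero] at hboundary
  refine hboundary.congr' ?_
  filter_upwards [self_mem_nhdsWithin] with δ hδ
  have hpos (q : Ed d × ℝ) : 0 < |q.2| + δ := add_pos_of_nonneg_of_pos (abs_nonneg _) hδ
  have hext (q : Ed d × ℝ) :
      poissonExtension Φ (q.1, |q.2| + δ) = poissonIntegral Φ (q.1, |q.2| + δ) := by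
    rw [poissonExtension_of_ne_zero (hpos q).ne', abs_of_pos (hpos q)]
  simp only [hext]
  exact (hΦ.integral_poissonIntegral_mul_lapProd hζ₂ hc hδ).symm

end WeakHarmonicity

end PoissonExtension

open PoissonExtension in
open scoped Topology in
theorem poisson_extension_harmonic_general {d : ℕ} {E : Set (Ed d)} (hE : IsOpen E) {Φ : Ed d → ℝ}
    (hΦ : PoissonIntegrable Φ) (hcont : ∀ x ∈ E, ContinuousAt Φ x)
    (hmass : ∀ x ∈ E, ∃ C, ∀ᶠ x' in 𝓝 x, SecDiffMassLE Φ C x')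
    (hharm : ∀ x ∈ E, fracLapAt d 1 Φ x 0) :
    ContDiffOn ℝ 2 (poissonExtension Φ) {p : Ed d × ℝ | p.2 ≠ 0 ∨ p.1 ∈ E} ∧
      ∀ p ∈ {p : Ed d × ℝ | p.2 ≠ 0 ∨ p.1 ∈ E}, lapProd d (poissonExtension Φ) p = 0 :=
  (hΦ.weaklyHarmonicProdOn_poissonExtension hE hcont hmass hharm).contDiffOn_and_lapProd_eq_zero
    (isOpen_setOf_ne_or_mem hE) (hΦ.continuousOn_poissonExtension hcont hmass)

/-- the Poisson extension of a function harmonic for `Δ^{1/2}` on `E ⊆ ℝ^d`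
is harmonic for the classical Laplacian on `D = {(x,t) : t ≠ 0 or x ∈ E} ⊆ ℝ^d × ℝ`. -/
theorem poisson_extension_harmonic (d : ℕ) (hd : 1 ≤ d)
    (E : Set (Ed d)) (hE : IsOpen E)
    (Φ : Ed d → ℝ) (hmeas : Measurable Φ)
    (hint : Integrable (fun y : Ed d => |Φ y| * (1 + ‖y‖) ^ (-(d : ℝ) - 1)))
    (hC2 : ContDiffOn ℝ 2 Φ E)
    (hharm : ∀ x ∈ E, fracLapAt d 1 Φ x 0)
    (U : Ed d × ℝ → ℝ)
    (hU : ∀ p : Ed d × ℝ,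
      U p = if p.2 = 0 then Φ p.1 else ∫ y : Ed d, poissonK d |p.2| (p.1 - y) * Φ y) :
    ContDiffOn ℝ 2 U {p : Ed d × ℝ | p.2 ≠ 0 ∨ p.1 ∈ E} ∧
      ∀ p ∈ {p : Ed d × ℝ | p.2 ≠ 0 ∨ p.1 ∈ E}, lapProd d U p = 0 := by
  obtain rfl : U = PoissonExtension.poissonExtension Φ := funext hU
  have hΦ :=
    PoissonExtension.poissonIntegrable_of_integrable_abs_mul hmeas.aestronglyMeasurable hint
  have hC2At (x : Ed d) (hx : x ∈ E) : ContDiffAt ℝ 2 Φ x := hC2.contDiffAt (hE.mem_nhds hx)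
  exact poisson_extension_harmonic_general hE hΦ (fun x hx => (hC2At x hx).continuousAt)
    (fun x hx => PoissonExtension.exists_eventually_secDiffMassLE_of_contDiffAt hΦ (hC2At x hx))
    hharm
end

section
/- For all λ ∈ (-d,α) and t ∈ [-1,1): u_λ(t) - u_0(t) = ∫_0^1 (1-r^λ)·(r^{α-λ-1} - r^{d-1})·(r²-2rt+1)^{-(d+α)/2} dr. -/
open MeasureTheory Metric Real Set Filter RealInnerProductSpace
open scoped ENNReal

/-! On `(1, ∞)` substitute `r ↦ r⁻¹`. The kernel `K r = (r ^ 2 - 2 * r * t + 1) ^ (-b / 2)` with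
`b = d + α` satisfies `K r⁻¹ = r ^ b * K r`, because `r ^ 2 - 2 * r * t + 1` is palindromic in `r`.
Its Mellin integral at `s` therefore folds onto `(0, 1)`, where the weight becomes
`r ^ (s - 1) + r ^ (b - s - 1)`, and the difference of two such weights factors. -/

section Inversion

variable {E : Type*} [NormedAddCommGroup E] [NormedSpace ℝ E] {s : Set ℝ}

theorem abs_neg_inv_sq (r : ℝ) : |-(r ^ 2)⁻¹| = (r ^ 2)⁻¹ := by
  rw [abs_neg, abs_of_nonneg (by positivity)]

theorem hasDerivWithinAt_inv_of_zero_notMem (hs₀ : 0 ∉ s) {r : ℝ} (hr : r ∈ s) :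
    HasDerivWithinAt (·⁻¹) (-(r ^ 2)⁻¹) s r :=
  hasDerivWithinAt_inv (ne_of_mem_of_not_mem hr hs₀) s

theorem integrableOn_inv_set_iff (hs : MeasurableSet s) (hs₀ : 0 ∉ s) (f : ℝ → E) :
    IntegrableOn f s⁻¹ ↔ IntegrableOn (fun r => (r ^ 2)⁻¹ • f r⁻¹) s := by
  simpa only [image_inv_eq_inv, abs_neg_inv_sq] using
    integrableOn_image_iff_integrableOn_abs_deriv_smul hs
      (fun _ => hasDerivWithinAt_inv_of_zero_notMem hs₀) inv_injective.injOn f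

theorem setIntegral_inv_set (hs : MeasurableSet s) (hs₀ : 0 ∉ s) (f : ℝ → E) :
    ∫ r in s⁻¹, f r = ∫ r in s, (r ^ 2)⁻¹ • f r⁻¹ := by
  simpa only [image_inv_eq_inv, abs_neg_inv_sq] using
    integral_image_eq_integral_abs_deriv_smul hs
      (fun _ => hasDerivWithinAt_inv_of_zero_notMem hs₀) inv_injective.injOn f

theorem inv_Ioo_zero_one : (Ioo (0 : ℝ) 1)⁻¹ = Ioi 1 := by
  rw [inv_Ioo_0_left one_pos, inv_one]

end Inversion

section MellinFold

variable {E : Type*} [NormedAddCommGroup E] [NormedSpace ℝ E] {K : ℝ → E} {b s : ℝ}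

theorem integrableOn_Ioo_rpow_smul_of_continuousOn (hcont : ContinuousOn K (Icc 0 1))
    (hs : 0 < s) :
    IntegrableOn (fun r => r ^ (s - 1) • K r) (Ioo 0 1) := by
  have hpow : IntegrableOn (fun r : ℝ => r ^ (s - 1)) (Icc 0 1) :=
    (integrableOn_Icc_iff_integrableOn_Ioo).2
      ((intervalIntegral.integrableOn_Ioo_rpow_iff zero_lt_one).2 (by linarith))
  exact (hpow.smul_continuousOn hcont isCompact_Icc).mono_set Ioo_subset_Icc_self

theorem inv_sq_smul_inv_rpow_smul {r : ℝ} (hr : 0 < r) (hK : K r⁻¹ = r ^ b • K r) :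
    (r ^ 2)⁻¹ • r⁻¹ ^ (s - 1) • K r⁻¹ = r ^ (b - s - 1) • K r := by
  rw [hK, smul_smul, smul_smul, ← rpow_two, ← rpow_neg hr.le, inv_rpow hr.le, ← rpow_neg hr.le,
    ← rpow_add hr, ← rpow_add hr]
  ring_nf

theorem integrableOn_Ioi_one_rpow_smul_iff (hK : ∀ r ∈ Ioo 0 1, K r⁻¹ = r ^ b • K r) :
    IntegrableOn (fun r => r ^ (s - 1) • K r) (Ioi 1) ↔
      IntegrableOn (fun r => r ^ (b - s - 1) • K r) (Ioo 0 1) := by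
  rw [← inv_Ioo_zero_one, integrableOn_inv_set_iff measurableSet_Ioo left_notMem_Ioo]
  exact integrableOn_congr_fun (fun r hr => inv_sq_smul_inv_rpow_smul hr.1 (hK r hr))
    measurableSet_Ioo

theorem integral_Ioi_one_rpow_smul (hK : ∀ r ∈ Ioo 0 1, K r⁻¹ = r ^ b • K r) :
    ∫ r in Ioi 1, r ^ (s - 1) • K r = ∫ r in Ioo 0 1, r ^ (b - s - 1) • K r := by
  rw [← inv_Ioo_zero_one, setIntegral_inv_set measurableSet_Ioo left_notMem_Ioo]
  exact setIntegral_congr_fun measurableSet_Ioo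
    fun r hr => inv_sq_smul_inv_rpow_smul hr.1 (hK r hr)

theorem integral_Ioi_rpow_smul_eq_integral_Ioo (hK : ∀ r ∈ Ioo 0 1, K r⁻¹ = r ^ b • K r)
    (hs : IntegrableOn (fun r => r ^ (s - 1) • K r) (Ioo 0 1))
    (hbs : IntegrableOn (fun r => r ^ (b - s - 1) • K r) (Ioo 0 1)) :
    ∫ r in Ioi 0, r ^ (s - 1) • K r =
      ∫ r in Ioo 0 1, (r ^ (s - 1) + r ^ (b - s - 1)) • K r := by
  calc ∫ r in Ioi 0, r ^ (s - 1) • K r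
      = (∫ r in Ioo 0 1, r ^ (s - 1) • K r) + ∫ r in Ioi 1, r ^ (s - 1) • K r := by
        rw [← Ioc_union_Ioi_eq_Ioi zero_le_one,
          setIntegral_union (Ioc_disjoint_Ioi le_rfl) measurableSet_Ioi
            ((integrableOn_Ioc_iff_integrableOn_Ioo).2 hs)
            ((integrableOn_Ioi_one_rpow_smul_iff hK).2 hbs),
          integral_Ioc_eq_integral_Ioo]
    _ = ∫ r in Ioo 0 1, (r ^ (s - 1) + r ^ (b - s - 1)) • K r := by
        rw [integral_Ioi_one_rpow_smul hK, ← integral_add hs hbs]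
        simp only [add_smul]

theorem integral_Ioi_rpow_smul_sub {s' : ℝ} (hcont : ContinuousOn K (Icc 0 1))
    (hK : ∀ r ∈ Ioo 0 1, K r⁻¹ = r ^ b • K r) (hs : s ∈ Ioo 0 b) (hs' : s' ∈ Ioo 0 b) :
    (∫ r in Ioi 0, r ^ (s - 1) • K r) - ∫ r in Ioi 0, r ^ (s' - 1) • K r =
      ∫ r in Ioo 0 1,
        ((r ^ (s - 1) + r ^ (b - s - 1)) - (r ^ (s' - 1) + r ^ (b - s' - 1))) • K r := by
  have hint {x : ℝ} (hx : 0 < x) := integrableOn_Ioo_rpow_smul_of_continuousOn hcont hx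
  have hfold {x : ℝ} (hx : x ∈ Ioo 0 b) :
      IntegrableOn (fun r => (r ^ (x - 1) + r ^ (b - x - 1)) • K r) (Ioo 0 1) := by
    simpa only [add_smul] using! (hint hx.1).add (hint (sub_pos.2 hx.2))
  rw [integral_Ioi_rpow_smul_eq_integral_Ioo hK (hint hs.1) (hint (sub_pos.2 hs.2)),
    integral_Ioi_rpow_smul_eq_integral_Ioo hK (hint hs'.1) (hint (sub_pos.2 hs'.2)),
    ← integral_sub (hfold hs) (hfold hs')]
  simp only [sub_smul]

end MellinFold

theorem sq_sub_two_mul_mul_add_one_pos {t r : ℝ} (ht : t < 1) (hr : 0 ≤ r) :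
    0 < r ^ 2 - 2 * r * t + 1 := by
  rcases hr.eq_or_lt with rfl | hr
  · norm_num
  · nlinarith [sq_nonneg (r - 1), mul_pos hr (sub_pos.2 ht)]

theorem continuousOn_sq_sub_two_mul_mul_add_one_rpow {t : ℝ} (ht : t < 1) (c : ℝ) :
    ContinuousOn (fun r : ℝ => (r ^ 2 - 2 * r * t + 1) ^ c) (Ici 0) :=
  ContinuousOn.rpow_const (by fun_prop)
    fun _ hr => Or.inl (sq_sub_two_mul_mul_add_one_pos ht hr).ne'

theorem inv_sq_sub_two_mul_mul_add_one_rpow {t r : ℝ} (ht : t < 1) (hr : 0 < r) (b : ℝ) :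
    (r⁻¹ ^ 2 - 2 * r⁻¹ * t + 1) ^ (-b / 2) = r ^ b * (r ^ 2 - 2 * r * t + 1) ^ (-b / 2) := by
  have hpalindrome : r⁻¹ ^ 2 - 2 * r⁻¹ * t + 1 = r ^ (-2 : ℝ) * (r ^ 2 - 2 * r * t + 1) := by
    rw [rpow_neg hr.le, rpow_two]
    field_simp
    ring
  rw [hpalindrome, mul_rpow (by positivity) (sq_sub_two_mul_mul_add_one_pos ht hr.le).le,
    ← rpow_mul hr.le]
  ring_nf

theorem rpow_add_rpow_sub_rpow_add_rpow {r : ℝ} (hr : 0 < r) (δ α lam mu : ℝ) :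
    (r ^ (δ + lam - 1) + r ^ (α - lam - 1)) - (r ^ (δ + mu - 1) + r ^ (α - mu - 1)) =
      (r ^ mu - r ^ lam) * (r ^ (α - lam - mu - 1) - r ^ (δ - 1)) := by
  simp only [sub_mul, mul_sub, ← rpow_add hr]
  ring_nf

theorem uKernel_diff_eq_general (d : ℕ) {α lam mu t : ℝ} (hlam : lam ∈ Ioo (-(d : ℝ)) α)
    (hmu : mu ∈ Ioo (-(d : ℝ)) α) (ht : t < 1) :
    uKernel d α lam t - uKernel d α mu t =
      ∫ r in Ioo (0 : ℝ) 1,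
        (r ^ mu - r ^ lam) * (r ^ (α - lam - mu - 1) - r ^ ((d : ℝ) - 1)) *
          (r ^ 2 - 2 * r * t + 1) ^ (-((d : ℝ) + α) / 2) := by
  have hmem {x : ℝ} (hx : x ∈ Ioo (-(d : ℝ)) α) : (d : ℝ) + x ∈ Ioo 0 ((d : ℝ) + α) :=
    ⟨neg_lt_iff_pos_add'.1 hx.1, by gcongr; exact hx.2⟩
  have hdiff := integral_Ioi_rpow_smul_sub
    ((continuousOn_sq_sub_two_mul_mul_add_one_rpow ht _).mono Icc_subset_Ici_self)
    (fun r hr => inv_sq_sub_two_mul_mul_add_one_rpow ht hr.1 ((d : ℝ) + α)) (hmem hlam) (hmem hmu)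
  refine hdiff.trans (setIntegral_congr_fun measurableSet_Ioo fun r hr => ?_)
  simp only [add_sub_add_left_eq_sub, smul_eq_mul, rpow_add_rpow_sub_rpow_add_rpow hr.1]

/-- formula for the difference `u_λ(t) - u_0(t)` as an integral over `(0,1)`. -/
theorem uKernel_diff_eq (d : ℕ) (hd : 2 ≤ d) (α : ℝ) (hα : 0 < α) (hα2 : α < 2) :
    ∀ lam ∈ Set.Ioo (-(d : ℝ)) α, ∀ t ∈ Set.Ico (-1 : ℝ) 1,
      uKernel d α lam t - uKernel d α 0 t =
        ∫ r in Set.Ioo (0 : ℝ) 1,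
          (1 - r ^ lam) * (r ^ (α - lam - 1) - r ^ ((d : ℝ) - 1)) *
            (r ^ 2 - 2 * r * t + 1) ^ (-((d : ℝ) + α) / 2) := by
  intro lam hlam t ht
  have hzero : (0 : ℝ) ∈ Ioo (-(d : ℝ)) α := ⟨by simpa using two_pos.trans_le hd, hα⟩
  simpa only [rpow_zero, sub_zero] using uKernel_diff_eq_general d hlam hzero ht.2
end

section
/- For every λ ∈ (-d,α): (i) u_λ(t) < ∞ for every t ∈ [-1,1), while the integral ∫_0^∞ r^{d+λ-1}·|r-1|^{-(d+α)} dr diverges (i.e. u_λ(1) = ∞); (ii) the function t ↦ u_λ(t) is strictly increasing on [-1,1). Moreover, for every fixed t ∈ [-1,1), the function λ ↦ u_λ(t) is strictly increasing on [(α-d)/2, α), and u_λ(t) → ∞ as λ → α from below. -/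
open MeasureTheory Metric Real Set Filter RealInnerProductSpace
open scoped ENNReal

/-!
Put `p = d + λ` and `s = d + α`. The inversion `r ↦ r⁻¹` maps `(0, 1)` onto `(1, ∞)` and replaces
`p` by `s - p`, so `u_λ(t)` is the integral over `(1, ∞)` of
`(r ^ (p - 1) + r ^ (s - p - 1)) * (r ^ 2 - 2 * r * t + 1) ^ (-s / 2)`.
For `t < 1` the second factor is comparable to `r ^ (-s)`, which gives finiteness for `0 < p < s`
and a lower bound of order `1 / (s - p)`. The first factor is, up to a constant multiple, a
hyperbolic cosine in `p` centred at `s / 2`, which gives monotonicity in `λ`; monotonicity in `t` is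
pointwise. At `t = 1` the integrand has the singularity `|r - 1| ^ (-s)` with `1 ≤ s`, which is not
integrable.
-/

section Radial

open scoped Topology

variable {p s t r : ℝ}

/-- The integrand of `u_λ(t)`, with `p = d + λ` and `s = d + α` as independent real parameters. -/
noncomputable def radialIntegrand (p s t r : ℝ) : ℝ :=
  r ^ (p - 1) * (r ^ 2 - 2 * r * t + 1) ^ (-s / 2)

/-- The kernel `u_λ(t)` as a function of `p = d + λ`, `s = d + α` and `t`; it takes values in
`[0, ∞]` so that divergence is recorded as the value `∞`. -/
noncomputable def radialIntegral (p s t : ℝ) : ℝ≥0∞ :=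
  ∫⁻ r in Ioi (0 : ℝ), ENNReal.ofReal (radialIntegrand p s t r)

lemma uKernelE_eq_radialIntegral (d : ℕ) (α lam t : ℝ) :
    uKernelE d α lam t = radialIntegral (d + lam) (d + α) t :=
  rfl

lemma quadratic_pos (hr : 0 < r) (ht : t < 1) : 0 < r ^ 2 - 2 * r * t + 1 := by
  nlinarith [sq_nonneg (r - 1), mul_pos hr (sub_pos.2 ht)]

lemma mul_sq_le_quadratic (hr : 0 ≤ r) (ht : t ≤ 1) :
    (1 - max t 0) * r ^ 2 ≤ r ^ 2 - 2 * r * t + 1 := by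
  have hmax : max t 0 ≤ 1 := max_le ht zero_le_one
  nlinarith [mul_le_mul_of_nonneg_left (le_max_left t 0) hr,
    mul_nonneg (le_max_right t 0) (sq_nonneg (r - 1))]

lemma quadratic_le_mul_sq (hr : 1 ≤ r) : r ^ 2 - 2 * r * t + 1 ≤ 2 * (1 + |t|) * r ^ 2 := by
  have hsq : r ≤ r ^ 2 := le_self_pow₀ hr two_ne_zero
  have hlin : r * -t ≤ r ^ 2 * |t| :=
    (mul_le_mul_of_nonneg_left (neg_le_abs t) (zero_le_one.trans hr)).trans
      (mul_le_mul_of_nonneg_right hsq (abs_nonneg t))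
  nlinarith

lemma sq_rpow_neg_div_two (x s : ℝ) : (x ^ 2) ^ (-s / 2) = |x| ^ (-s) := by
  rw [rpow_div_two_eq_sqrt _ (sq_nonneg x), sqrt_sq_eq_abs]

lemma measurable_radialIntegrand (p s t : ℝ) : Measurable (radialIntegrand p s t) := by
  unfold radialIntegrand
  fun_prop

lemma radialIntegrand_pos (hr : 0 < r) (ht : t < 1) : 0 < radialIntegrand p s t r :=
  mul_pos (rpow_pos_of_pos hr _) (rpow_pos_of_pos (quadratic_pos hr ht) _)

lemma radialIntegrand_at_one (p s r : ℝ) :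
    radialIntegrand p s 1 r = r ^ (p - 1) * |r - 1| ^ (-s) := by
  rw [radialIntegrand, ← sq_rpow_neg_div_two]
  ring_nf

lemma radialIntegrand_strictMonoOn (hs : 0 < s) (hr : 0 < r) :
    StrictMonoOn (fun t => radialIntegrand p s t r) (Iio 1) := by
  intro t _ t' ht' htt'
  refine mul_lt_mul_of_pos_left ?_ (rpow_pos_of_pos hr _)
  exact rpow_lt_rpow_of_neg (quadratic_pos hr ht') (by gcongr) (by linarith)

lemma rpow_mul_mul_sq_rpow {c : ℝ} (hc : 0 ≤ c) (hr : 0 < r) :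
    r ^ (p - 1) * (c * r ^ 2) ^ (-s / 2) = c ^ (-s / 2) * r ^ (-(s - p) - 1) := by
  rw [mul_rpow hc (sq_nonneg r), sq_rpow_neg_div_two, abs_of_pos hr, mul_left_comm, ← rpow_add hr]
  ring_nf

lemma radialIntegrand_le (hs : 0 ≤ s) (hr : 0 < r) (ht : t < 1) :
    radialIntegrand p s t r ≤ (1 - max t 0) ^ (-s / 2) * r ^ (-(s - p) - 1) := by
  have hc : 0 < 1 - max t 0 := sub_pos.2 (max_lt ht one_pos)
  rw [← rpow_mul_mul_sq_rpow hc.le hr]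
  refine mul_le_mul_of_nonneg_left ?_ (rpow_nonneg hr.le _)
  exact rpow_le_rpow_of_nonpos (by positivity) (mul_sq_le_quadratic hr.le ht.le) (by linarith)

lemma le_radialIntegrand (hs : 0 ≤ s) (hr : 1 ≤ r) (ht : t < 1) :
    (2 * (1 + |t|)) ^ (-s / 2) * r ^ (-(s - p) - 1) ≤ radialIntegrand p s t r := by
  have hr0 : 0 < r := one_pos.trans_le hr
  rw [← rpow_mul_mul_sq_rpow (by positivity) hr0]
  refine mul_le_mul_of_nonneg_left ?_ (rpow_nonneg hr0.le _)
  exact rpow_le_rpow_of_nonpos (quadratic_pos hr0 ht) (quadratic_le_mul_sq hr) (by linarith)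

lemma lintegral_const_mul_rpow_Ioi_one {a c : ℝ} (ha : 0 < a) (hc : 0 ≤ c) :
    ∫⁻ r in Ioi (1 : ℝ), ENNReal.ofReal (c * r ^ (-a - 1)) = ENNReal.ofReal (c / a) := by
  have hexp : -a - 1 < -1 := by linarith
  have hint : IntegrableOn (fun r : ℝ => c * r ^ (-a - 1)) (Ioi 1) :=
    (integrableOn_Ioi_rpow_of_lt hexp one_pos).const_mul c
  have hnonneg : ∀ r ∈ Ioi (1 : ℝ), 0 ≤ c * r ^ (-a - 1) := fun r hr =>
    mul_nonneg hc (rpow_nonneg (zero_le_one.trans (mem_Ioi.1 hr).le) _)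
  rw [← ofReal_integral_eq_lintegral_ofReal hint
      (ae_restrict_of_forall_mem measurableSet_Ioi hnonneg),
    integral_const_mul, integral_Ioi_rpow_of_lt hexp one_pos, one_rpow, sub_add_cancel,
    neg_div_neg_eq, mul_one_div]

lemma lintegral_Ioi_one_radialIntegrand_le (hs : 0 ≤ s) (hps : p < s) (ht : t < 1) :
    ∫⁻ r in Ioi (1 : ℝ), ENNReal.ofReal (radialIntegrand p s t r) ≤
      ENNReal.ofReal ((1 - max t 0) ^ (-s / 2) / (s - p)) := by
  have hc : 0 < 1 - max t 0 := sub_pos.2 (max_lt ht one_pos)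
  rw [← lintegral_const_mul_rpow_Ioi_one (sub_pos.2 hps) (by positivity)]
  exact setLIntegral_mono' measurableSet_Ioi fun r hr =>
    ENNReal.ofReal_le_ofReal (radialIntegrand_le hs (one_pos.trans hr) ht)

lemma le_radialIntegral (hs : 0 ≤ s) (hps : p < s) (ht : t < 1) :
    ENNReal.ofReal ((2 * (1 + |t|)) ^ (-s / 2) / (s - p)) ≤ radialIntegral p s t := by
  rw [← lintegral_const_mul_rpow_Ioi_one (sub_pos.2 hps) (by positivity)]
  refine (setLIntegral_mono' measurableSet_Ioi fun r (hr : 1 < r) => ?_).trans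
    (lintegral_mono_set (Ioi_subset_Ioi zero_le_one))
  exact ENNReal.ofReal_le_ofReal (le_radialIntegrand hs hr.le ht)

lemma inv_sq_mul_radialIntegrand_inv (hr : 0 < r) (ht : t < 1) :
    (r ^ 2)⁻¹ * radialIntegrand p s t r⁻¹ = radialIntegrand (s - p) s t r := by
  have hquad : r⁻¹ ^ 2 - 2 * r⁻¹ * t + 1 = (r ^ 2 - 2 * r * t + 1) * r⁻¹ ^ 2 := by
    field_simp
    ring
  have hpow : (r ^ 2)⁻¹ * (r⁻¹ ^ (p - 1) * r⁻¹ ^ (-s)) = r ^ (s - p - 1) := by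
    rw [← rpow_two, ← rpow_neg hr.le, inv_rpow hr.le, inv_rpow hr.le, ← rpow_neg hr.le,
      ← rpow_neg hr.le, ← rpow_add hr, ← rpow_add hr]
    ring_nf
  rw [radialIntegrand, radialIntegrand, hquad, mul_rpow (quadratic_pos hr ht).le (sq_nonneg _),
    sq_rpow_neg_div_two, abs_of_pos (inv_pos.2 hr), ← hpow]
  ring

lemma lintegral_Ioo_radialIntegrand (ht : t < 1) :
    ∫⁻ r in Ioo (0 : ℝ) 1, ENNReal.ofReal (radialIntegrand p s t r) =
      ∫⁻ r in Ioi (1 : ℝ), ENNReal.ofReal (radialIntegrand (s - p) s t r) := by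
  have himage : Inv.inv '' Ioi (1 : ℝ) = Ioo 0 1 := by
    rw [image_inv_eq_inv, inv_Ioi₀ one_pos, inv_one]
  rw [← himage, lintegral_image_eq_lintegral_abs_deriv_mul measurableSet_Ioi
    (fun r (hr : 1 < r) => (hasDerivAt_inv (one_pos.trans hr).ne').hasDerivWithinAt)
    inv_injective.injOn]
  refine setLIntegral_congr_fun measurableSet_Ioi fun r (hr : 1 < r) => ?_
  rw [← ENNReal.ofReal_mul (abs_nonneg _), abs_neg, abs_of_nonneg (by positivity),
    inv_sq_mul_radialIntegrand_inv (one_pos.trans hr) ht]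

lemma radialIntegral_eq_add (ht : t < 1) :
    radialIntegral p s t =
      (∫⁻ r in Ioi (1 : ℝ), ENNReal.ofReal (radialIntegrand (s - p) s t r)) +
        ∫⁻ r in Ioi (1 : ℝ), ENNReal.ofReal (radialIntegrand p s t r) := by
  rw [radialIntegral, ← Ioc_union_Ioi_eq_Ioi zero_le_one,
    lintegral_union measurableSet_Ioi (Ioc_disjoint_Ioi le_rfl),
    setLIntegral_congr Ioo_ae_eq_Ioc.symm, lintegral_Ioo_radialIntegrand ht]

lemma radialIntegral_lt_top (hp : 0 < p) (hps : p < s) (ht : t < 1) :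
    radialIntegral p s t < ⊤ := by
  have hs : 0 ≤ s := (hp.trans hps).le
  rw [radialIntegral_eq_add ht, ENNReal.add_lt_top]
  exact ⟨(lintegral_Ioi_one_radialIntegrand_le hs (sub_lt_self s hp) ht).trans_lt
    ENNReal.ofReal_lt_top, (lintegral_Ioi_one_radialIntegrand_le hs hps ht).trans_lt
    ENNReal.ofReal_lt_top⟩

lemma inv_sub_one_isBigO_radialIntegrand (p : ℝ) (hs : 1 ≤ s) :
    (fun r : ℝ => (r - 1)⁻¹) =O[𝓝[≠] 1] radialIntegrand p s 1 := by
  have hpow : (fun _ : ℝ => (1 : ℝ)) =O[𝓝[≠] 1] fun r : ℝ => r ^ (p - 1) := by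
    refine ((Asymptotics.isEquivalent_const_iff_tendsto one_ne_zero).2 ?_).symm.isBigO
    simpa only [one_rpow] using
      ((continuousAt_rpow_const 1 (p - 1) (.inl one_ne_zero)).tendsto.mono_left
        nhdsWithin_le_nhds)
  have hsing : (fun r : ℝ => (r - 1)⁻¹) =O[𝓝[≠] 1] fun r : ℝ => |r - 1| ^ (-s) := by
    refine .of_bound' ?_
    filter_upwards [self_mem_nhdsWithin, nhdsWithin_le_nhds (Metric.ball_mem_nhds 1 one_pos)]
      with r hr hr'
    have hpos : 0 < |r - 1| := abs_pos.2 (sub_ne_zero.2 hr)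
    rw [norm_inv, norm_eq_abs, norm_of_nonneg (by positivity), ← rpow_neg_one]
    exact rpow_le_rpow_of_exponent_ge hpos (mem_ball_iff_norm.1 hr').le (neg_le_neg hs)
  have hfactor : radialIntegrand p s 1 = fun r => r ^ (p - 1) * |r - 1| ^ (-s) :=
    funext (radialIntegrand_at_one p s)
  simpa only [hfactor, one_mul] using hpow.mul hsing

lemma radialIntegral_at_one (p : ℝ) (hs : 1 ≤ s) : radialIntegral p s 1 = ⊤ := by
  by_contra hfin
  have hint : IntegrableOn (radialIntegrand p s 1) (Ioi 0) := by
    refine (lintegral_ofReal_ne_top_iff_integrable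
      (measurable_radialIntegrand p s 1).aestronglyMeasurable
      (ae_restrict_of_forall_mem measurableSet_Ioi fun r (hr : 0 < r) => ?_)).1 hfin
    rw [radialIntegrand_at_one]
    positivity
  refine not_intervalIntegrable_of_sub_inv_isBigO_punctured (a := 1) (b := 2)
    (inv_sub_one_isBigO_radialIntegrand p hs) one_lt_two.ne left_mem_uIcc ?_
  rw [intervalIntegrable_iff_integrableOn_Ioc_of_le one_le_two]
  exact hint.mono_set fun r hr => one_pos.trans hr.1

lemma radialIntegral_strictMonoOn (hp : 0 < p) (hps : p < s) :
    StrictMonoOn (radialIntegral p s) (Iio 1) := by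
  intro t ht t' ht' htt'
  refine setLIntegral_strict_mono measurableSet_Ioi (by simp)
    (measurable_radialIntegrand p s t').ennreal_ofReal (radialIntegral_lt_top hp hps ht).ne
    (ae_of_all _ fun r hr => ?_)
  exact (ENNReal.ofReal_lt_ofReal_iff (radialIntegrand_pos hr ht')).2
    (radialIntegrand_strictMonoOn (hp.trans hps) hr ht ht' htt')

lemma rpow_add_rpow_sub_strictMonoOn {x : ℝ} (hx : 1 < x) (s : ℝ) :
    StrictMonoOn (fun p => x ^ p + x ^ (s - p)) (Ici (s / 2)) := by
  intro p (hp : s / 2 ≤ p) q _ hpq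
  have hx0 : 0 < x := one_pos.trans hx
  have hgap : 1 < x ^ (q - p) := one_lt_rpow hx (sub_pos.2 hpq)
  have hlt : x ^ (s - q) < x ^ p := rpow_lt_rpow_of_exponent_lt hx (by linarith)
  have hq : x ^ q = x ^ p * x ^ (q - p) := by rw [← rpow_add hx0, add_sub_cancel]
  have hsp : x ^ (s - p) = x ^ (s - q) * x ^ (q - p) := by
    rw [← rpow_add hx0, sub_add_sub_cancel]
  have hprod : 0 < (x ^ p - x ^ (s - q)) * (x ^ (q - p) - 1) :=
    mul_pos (sub_pos.2 hlt) (sub_pos.2 hgap)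
  simp only [hq, hsp]
  linarith

lemma radialIntegrand_add_strictMonoOn (s : ℝ) (hr : 1 < r) (ht : t < 1) :
    StrictMonoOn (fun p => radialIntegrand (s - p) s t r + radialIntegrand p s t r)
      (Ici (s / 2)) := by
  intro p (hp : s / 2 ≤ p) q _ hpq
  have hpow : r ^ (p - 1) + r ^ (s - p - 1) < r ^ (q - 1) + r ^ (s - q - 1) := by
    have h := rpow_add_rpow_sub_strictMonoOn hr (s - 2) (a := p - 1) (b := q - 1)
      (mem_Ici.2 (by linarith)) (mem_Ici.2 (by linarith)) (by linarith)
    ring_nf at h ⊢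
    exact h
  simp only [radialIntegrand, ← add_mul]
  rw [add_comm (r ^ (s - p - 1)), add_comm (r ^ (s - q - 1))]
  exact mul_lt_mul_of_pos_right hpow (rpow_pos_of_pos (quadratic_pos (one_pos.trans hr) ht) _)

lemma radialIntegral_eq_lintegral_add (p s : ℝ) (ht : t < 1) :
    radialIntegral p s t = ∫⁻ r in Ioi (1 : ℝ),
      ENNReal.ofReal (radialIntegrand (s - p) s t r + radialIntegrand p s t r) := by
  rw [radialIntegral_eq_add ht,
    ← lintegral_add_left (measurable_radialIntegrand (s - p) s t).ennreal_ofReal]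
  refine setLIntegral_congr_fun measurableSet_Ioi fun r (hr : 1 < r) => ?_
  have hr0 : 0 < r := one_pos.trans hr
  exact (ENNReal.ofReal_add (radialIntegrand_pos hr0 ht).le (radialIntegrand_pos hr0 ht).le).symm

lemma radialIntegral_strictMonoOn_exponent (s : ℝ) (ht : t < 1) :
    StrictMonoOn (fun p => radialIntegral p s t) (Ico (s / 2) s) := by
  intro p hp q hq hpq
  have hp0 : 0 < p := by linarith [hp.1, hp.2]
  have hfin := (radialIntegral_lt_top hp0 hp.2 ht).ne
  simp only [radialIntegral_eq_lintegral_add _ s ht] at hfin ⊢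
  refine setLIntegral_strict_mono measurableSet_Ioi (by simp)
    ((measurable_radialIntegrand _ s t).add (measurable_radialIntegrand q s t)).ennreal_ofReal
    hfin (ae_of_all _ fun r (hr : 1 < r) => ?_)
  have hr0 : 0 < r := one_pos.trans hr
  exact (ENNReal.ofReal_lt_ofReal_iff
    (add_pos (radialIntegrand_pos hr0 ht) (radialIntegrand_pos hr0 ht))).2
    (radialIntegrand_add_strictMonoOn s hr ht hp.1 hq.1 hpq)

lemma tendsto_radialIntegral_nhdsLT (hs : 0 ≤ s) (ht : t < 1) :
    Tendsto (fun p => radialIntegral p s t) (𝓝[<] s) (𝓝 ⊤) := by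
  have hsub : Tendsto (fun p => s - p) (𝓝[<] s) (𝓝[>] 0) := by
    rw [← sub_self s]
    exact map_subLeft_nhdsLT.le
  have hlower : Tendsto (fun p => ENNReal.ofReal ((2 * (1 + |t|)) ^ (-s / 2) / (s - p)))
      (𝓝[<] s) (𝓝 ⊤) :=
    ENNReal.tendsto_ofReal_atTop.comp
      ((tendsto_inv_nhdsGT_zero.comp hsub).const_mul_atTop (by positivity))
  refine tendsto_nhds_top_mono hlower ?_
  filter_upwards [self_mem_nhdsWithin] with p hp using le_radialIntegral hs hp ht

lemma uKernelE_strictMonoOn_exponent (d : ℕ) (α : ℝ) (ht : t < 1) :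
    StrictMonoOn (fun μ => uKernelE d α μ t) (Ico ((α - d) / 2) α) := by
  simp only [uKernelE_eq_radialIntegral]
  exact (radialIntegral_strictMonoOn_exponent (d + α) ht).comp
    (fun _ _ _ _ h => add_lt_add_right h (d : ℝ)) fun μ hμ =>
      ⟨by linarith [hμ.1], by linarith [hμ.2]⟩

lemma tendsto_uKernelE_nhdsLT {d : ℕ} {α : ℝ} (hs : 0 ≤ d + α) (ht : t < 1) :
    Tendsto (fun μ => uKernelE d α μ t) (𝓝[<] α) (𝓝 ⊤) := by
  simp only [uKernelE_eq_radialIntegral]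
  exact (tendsto_radialIntegral_nhdsLT hs ht).comp map_add_left_nhdsLT.le

end Radial

theorem uKernel_monotonicity_general (d : ℕ) (α : ℝ) (hs : 1 ≤ d + α) :
    ∀ lam ∈ Ioo (-(d : ℝ)) α,
      (∀ t ∈ Iio (1 : ℝ), uKernelE d α lam t < ⊤) ∧
      uKernelE d α lam 1 = ⊤ ∧
      StrictMonoOn (fun t => uKernelE d α lam t) (Iio (1 : ℝ)) ∧
      ∀ t ∈ Iio (1 : ℝ),
        StrictMonoOn (fun μ => uKernelE d α μ t) (Ico ((α - (d : ℝ)) / 2) α) ∧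
        Tendsto (fun μ => uKernelE d α μ t) (nhdsWithin α (Iio α)) (nhds ⊤) := by
  rintro lam ⟨hlam, hlam'⟩
  have hp : 0 < (d : ℝ) + lam := by linarith
  have hps : (d : ℝ) + lam < d + α := by linarith
  refine ⟨?_, ?_, ?_, fun t ht => ⟨uKernelE_strictMonoOn_exponent d α ht,
    tendsto_uKernelE_nhdsLT (zero_le_one.trans hs) ht⟩⟩ <;>
    simp only [uKernelE_eq_radialIntegral]
  · exact fun t ht => radialIntegral_lt_top hp hps ht
  · exact radialIntegral_at_one _ hs
  · exact radialIntegral_strictMonoOn hp hps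

/-- finiteness and monotonicity properties of the kernel `u_λ(t)`
(as a value in `[0,∞]`): finiteness for `t ∈ [-1,1)`, divergence at `t = 1`, strict
monotonicity in `t`, strict monotonicity in `λ` on `[(α-d)/2, α)`, and blow-up as `λ → α⁻`. -/
theorem uKernel_monotonicity (d : ℕ) (hd : 2 ≤ d) (α : ℝ) (hα : 0 < α) (hα2 : α < 2) :
    ∀ lam ∈ Set.Ioo (-(d : ℝ)) α,
      (∀ t ∈ Set.Ico (-1 : ℝ) 1, uKernelE d α lam t < ⊤) ∧
      uKernelE d α lam 1 = ⊤ ∧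
      StrictMonoOn (fun t => uKernelE d α lam t) (Set.Ico (-1 : ℝ) 1) ∧
      ∀ t ∈ Set.Ico (-1 : ℝ) 1,
        StrictMonoOn (fun μ => uKernelE d α μ t) (Set.Ico ((α - (d : ℝ)) / 2) α) ∧
        Filter.Tendsto (fun μ => uKernelE d α μ t) (nhdsWithin α (Set.Iio α)) (nhds ⊤) := by
  have hd' : (2 : ℝ) ≤ d := by exact_mod_cast hd
  intro lam hlam
  obtain ⟨hfin, htop, hmono, hexp⟩ := uKernel_monotonicity_general d α (by linarith) lam hlam
  exact ⟨fun t ht => hfin t ht.2, htop, hmono.mono Ico_subset_Iio_self, fun t ht => hexp t ht.2⟩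
end
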